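/- arXiv:math/0211430 — 2 statements merged into one kernel-verified Lean document; each statement's English description precedes it below -/
import Mathlib

section
/- Let H be a finite dimensional quasi-bialgebra over a field k and (𝔄, ρ, Φ_ρ) a right H-comodule algebra. Then the vector space 𝔄⊗H*, with multiplication (a #̄ φ)(a' #̄ ψ) = ∑ a a'⟨0⟩ x̃¹_ρ #̄ (φ ↼ a'⟨1⟩ x̃²_ρ)(ψ ↼ x̃³_ρ) (where Φ_ρ⁻¹ = ∑x̃¹_ρ⊗x̃²_ρ⊗x̃³_ρ and ρ(a') = ∑a'⟨0⟩⊗a'⟨1⟩), unit 1_𝔄 #̄ ε, and left H-action h·(a #̄ φ) = a #̄ (h ⇀ φ), is a left H-module algebra (the quasi-smash product 𝔄 #̄ H*). -/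
open TensorProduct Finset

noncomputable section

/-- A quasi-bialgebra in the sense of Drinfeld, together with chosen finite
Sweedler-type families representing the comultiplication and the reassociator. -/
structure QuasiBialgebra (k : Type*) [Field k] (H : Type*) [Ring H] [Algebra k H] where
  comul : H →ₐ[k] H ⊗[k] H
  counit : H →ₐ[k] k
  nD : ℕ
  D1 : H → ℕ → H
  D2 : H → ℕ → H
  hcomul : ∀ h, comul h = ∑ i ∈ range nD, D1 h i ⊗ₜ[k] D2 h i
  nP : ℕ
  X1 : ℕ → H
  X2 : ℕ → H
  X3 : ℕ → H
  nQ : ℕ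
  x1 : ℕ → H
  x2 : ℕ → H
  x3 : ℕ → H
  P_inv : ∑ s ∈ range nP, ∑ q ∈ range nQ,
      (X1 s * x1 q) ⊗ₜ[k] ((X2 s * x2 q) ⊗ₜ[k] (X3 s * x3 q)) =
      (1 : H) ⊗ₜ[k] ((1 : H) ⊗ₜ[k] (1 : H))
  inv_P : ∑ q ∈ range nQ, ∑ s ∈ range nP,
      (x1 q * X1 s) ⊗ₜ[k] ((x2 q * X2 s) ⊗ₜ[k] (x3 q * X3 s)) =
      (1 : H) ⊗ₜ[k] ((1 : H) ⊗ₜ[k] (1 : H))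
  coassoc : ∀ h : H,
    ∑ i ∈ range nD, ∑ j ∈ range nD,
      D1 h i ⊗ₜ[k] (D1 (D2 h i) j ⊗ₜ[k] D2 (D2 h i) j) =
    ∑ s ∈ range nP, ∑ i ∈ range nD, ∑ j ∈ range nD, ∑ q ∈ range nQ,
      (X1 s * D1 (D1 h i) j * x1 q) ⊗ₜ[k]
        ((X2 s * D2 (D1 h i) j * x2 q) ⊗ₜ[k] (X3 s * D2 h i * x3 q))
  counit_r : ∀ h : H, ∑ i ∈ range nD, counit (D2 h i) • D1 h i = h
  counit_l : ∀ h : H, ∑ i ∈ range nD, counit (D1 h i) • D2 h i = h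
  pentagon :
    ∑ p ∈ range nP, ∑ s ∈ range nP, ∑ l ∈ range nD, ∑ r ∈ range nP,
      (X1 s * X1 r) ⊗ₜ[k] ((X1 p * D1 (X2 s) l * X2 r) ⊗ₜ[k]
        ((X2 p * D2 (X2 s) l * X3 r) ⊗ₜ[k] (X3 p * X3 s))) =
    ∑ p ∈ range nP, ∑ s ∈ range nP, ∑ l ∈ range nD, ∑ j ∈ range nD,
      (X1 p * D1 (X1 s) j) ⊗ₜ[k] ((X2 p * D2 (X1 s) j) ⊗ₜ[k]
        ((D1 (X3 p) l * X2 s) ⊗ₜ[k] (D2 (X3 p) l * X3 s)))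
  normal : ∑ s ∈ range nP, counit (X2 s) • (X1 s ⊗ₜ[k] X3 s) = (1 : H) ⊗ₜ[k] (1 : H)

/-- A quasi-Hopf algebra: a quasi-bialgebra with an anti-automorphism `S`
and elements `aE = α`, `bE = β` satisfying the antipode axioms. -/
structure QuasiHopfAlgebra (k : Type*) [Field k] (H : Type*) [Ring H] [Algebra k H]
    extends QuasiBialgebra k H where
  S : H →ₗ[k] H
  Sinv : H →ₗ[k] H
  S_Sinv : ∀ h, S (Sinv h) = h
  Sinv_S : ∀ h, Sinv (S h) = h
  S_one : S 1 = 1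
  S_mul : ∀ g h : H, S (g * h) = S h * S g
  aE : H
  bE : H
  antip_l : ∀ h, ∑ i ∈ range nD, S (D1 h i) * aE * D2 h i = counit h • aE
  antip_r : ∀ h, ∑ i ∈ range nD, D1 h i * bE * S (D2 h i) = counit h • bE
  antip_X : ∑ s ∈ range nP, X1 s * bE * S (X2 s) * aE * X3 s = 1
  antip_x : ∑ q ∈ range nQ, S (x1 q) * aE * x2 q * bE * S (x3 q) = 1

/-- The Drinfeld twist `f` of a quasi-Hopf algebra, given by families `f₁ ⊗ f₂`
with inverse `g₁ ⊗ g₂`, together with its defining formula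
`f = ∑ (S⊗S)(Δᵒᵖ(x¹)) γ Δ(x²βS(x³))`, `γ = ∑ S(A²)αA³ ⊗ S(A¹)αA⁴`,
`∑A¹⊗A²⊗A³⊗A⁴ = (Φ⊗1)(Δ⊗id⊗id)(Φ⁻¹)`. -/
structure DrinfeldTwist {k : Type*} [Field k] {H : Type*} [Ring H] [Algebra k H]
    (QH : QuasiHopfAlgebra k H) where
  nf : ℕ
  f1 : ℕ → H
  f2 : ℕ → H
  g1 : ℕ → H
  g2 : ℕ → H
  f_inv : ∑ t ∈ range nf, ∑ u ∈ range nf,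
      (f1 t * g1 u) ⊗ₜ[k] (f2 t * g2 u) = (1 : H) ⊗ₜ[k] (1 : H)
  inv_f : ∑ u ∈ range nf, ∑ t ∈ range nf,
      (g1 u * f1 t) ⊗ₜ[k] (g2 u * f2 t) = (1 : H) ⊗ₜ[k] (1 : H)
  h_f : ∑ t ∈ range nf, f1 t ⊗ₜ[k] f2 t =
    ∑ j ∈ range QH.nQ, ∑ l ∈ range QH.nD, ∑ p ∈ range QH.nP, ∑ j' ∈ range QH.nQ,
      ∑ l' ∈ range QH.nD, ∑ l'' ∈ range QH.nD,
      (QH.S (QH.D2 (QH.x1 j) l) *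
          (QH.S (QH.X2 p * QH.D2 (QH.x1 j') l') * QH.aE * (QH.X3 p * QH.x2 j')) *
          QH.D1 (QH.x2 j * QH.bE * QH.S (QH.x3 j)) l'') ⊗ₜ[k]
        (QH.S (QH.D1 (QH.x1 j) l) *
          (QH.S (QH.X1 p * QH.D1 (QH.x1 j') l') * QH.aE * QH.x3 j') *
          QH.D2 (QH.x2 j * QH.bE * QH.S (QH.x3 j)) l'')

/-- A right `H`-comodule algebra over a quasi-bialgebra, with Sweedler families. -/
structure RightComoduleAlgebra {k : Type*} [Field k] {H : Type*} [Ring H] [Algebra k H]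
    (QB : QuasiBialgebra k H) (A : Type*) [Ring A] [Algebra k A] where
  rho : A →ₐ[k] A ⊗[k] H
  nR : ℕ
  r0 : A → ℕ → A
  r1 : A → ℕ → H
  hrho : ∀ a, rho a = ∑ i ∈ range nR, r0 a i ⊗ₜ[k] r1 a i
  nP : ℕ
  P1 : ℕ → A
  P2 : ℕ → H
  P3 : ℕ → H
  nQ : ℕ
  Q1 : ℕ → A
  Q2 : ℕ → H
  Q3 : ℕ → H
  P_inv : ∑ s ∈ range nP, ∑ q ∈ range nQ,
      (P1 s * Q1 q) ⊗ₜ[k] ((P2 s * Q2 q) ⊗ₜ[k] (P3 s * Q3 q)) =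
      (1 : A) ⊗ₜ[k] ((1 : H) ⊗ₜ[k] (1 : H))
  inv_P : ∑ q ∈ range nQ, ∑ s ∈ range nP,
      (Q1 q * P1 s) ⊗ₜ[k] ((Q2 q * P2 s) ⊗ₜ[k] (Q3 q * P3 s)) =
      (1 : A) ⊗ₜ[k] ((1 : H) ⊗ₜ[k] (1 : H))
  rca1 : ∀ a : A,
    ∑ s ∈ range nP, ∑ i ∈ range nR, ∑ j ∈ range nR,
      (P1 s * r0 (r0 a i) j) ⊗ₜ[k] ((P2 s * r1 (r0 a i) j) ⊗ₜ[k] (P3 s * r1 a i)) =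
    ∑ i ∈ range nR, ∑ l ∈ range QB.nD, ∑ s ∈ range nP,
      (r0 a i * P1 s) ⊗ₜ[k] ((QB.D1 (r1 a i) l * P2 s) ⊗ₜ[k] (QB.D2 (r1 a i) l * P3 s))
  rca2 :
    ∑ s ∈ range QB.nP, ∑ i ∈ range nP, ∑ l ∈ range QB.nD, ∑ j ∈ range nP,
      (P1 i * P1 j) ⊗ₜ[k] ((QB.X1 s * QB.D1 (P2 i) l * P2 j) ⊗ₜ[k]
        ((QB.X2 s * QB.D2 (P2 i) l * P3 j) ⊗ₜ[k] (QB.X3 s * P3 i))) =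
    ∑ i ∈ range nP, ∑ l ∈ range QB.nD, ∑ j ∈ range nP, ∑ u ∈ range nR,
      (P1 i * r0 (P1 j) u) ⊗ₜ[k] ((P2 i * r1 (P1 j) u) ⊗ₜ[k]
        ((QB.D1 (P3 i) l * P2 j) ⊗ₜ[k] (QB.D2 (P3 i) l * P3 j)))
  rca3 : ∀ a, ∑ i ∈ range nR, QB.counit (r1 a i) • r0 a i = a
  rca4a : ∑ s ∈ range nP, QB.counit (P2 s) • (P1 s ⊗ₜ[k] P3 s) = (1 : A) ⊗ₜ[k] (1 : H)
  rca4b : ∑ s ∈ range nP, QB.counit (P3 s) • (P1 s ⊗ₜ[k] P2 s) = (1 : A) ⊗ₜ[k] (1 : H)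

/-- A left `H`-comodule algebra over a quasi-bialgebra, with Sweedler families. -/
structure LeftComoduleAlgebra {k : Type*} [Field k] {H : Type*} [Ring H] [Algebra k H]
    (QB : QuasiBialgebra k H) (B : Type*) [Ring B] [Algebra k B] where
  lam : B →ₐ[k] H ⊗[k] B
  nL : ℕ
  l1 : B → ℕ → H
  l0 : B → ℕ → B
  hlam : ∀ b, lam b = ∑ i ∈ range nL, l1 b i ⊗ₜ[k] l0 b i
  nP : ℕ
  P1 : ℕ → H
  P2 : ℕ → H
  P3 : ℕ → B
  nQ : ℕ
  Q1 : ℕ → H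
  Q2 : ℕ → H
  Q3 : ℕ → B
  P_inv : ∑ s ∈ range nP, ∑ q ∈ range nQ,
      (P1 s * Q1 q) ⊗ₜ[k] ((P2 s * Q2 q) ⊗ₜ[k] (P3 s * Q3 q)) =
      (1 : H) ⊗ₜ[k] ((1 : H) ⊗ₜ[k] (1 : B))
  inv_P : ∑ q ∈ range nQ, ∑ s ∈ range nP,
      (Q1 q * P1 s) ⊗ₜ[k] ((Q2 q * P2 s) ⊗ₜ[k] (Q3 q * P3 s)) =
      (1 : H) ⊗ₜ[k] ((1 : H) ⊗ₜ[k] (1 : B))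
  lca1 : ∀ b : B,
    ∑ i ∈ range nL, ∑ l ∈ range nL, ∑ s ∈ range nP,
      (l1 b i * P1 s) ⊗ₜ[k] ((l1 (l0 b i) l * P2 s) ⊗ₜ[k] (l0 (l0 b i) l * P3 s)) =
    ∑ s ∈ range nP, ∑ i ∈ range nL, ∑ l ∈ range QB.nD,
      (P1 s * QB.D1 (l1 b i) l) ⊗ₜ[k] ((P2 s * QB.D2 (l1 b i) l) ⊗ₜ[k] (P3 s * l0 b i))
  lca2 :
    ∑ p ∈ range nP, ∑ s ∈ range nP, ∑ l ∈ range QB.nD, ∑ r ∈ range QB.nP,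
      (P1 s * QB.X1 r) ⊗ₜ[k] ((P1 p * QB.D1 (P2 s) l * QB.X2 r) ⊗ₜ[k]
        ((P2 p * QB.D2 (P2 s) l * QB.X3 r) ⊗ₜ[k] (P3 p * P3 s))) =
    ∑ p ∈ range nP, ∑ s ∈ range nP, ∑ j ∈ range QB.nD, ∑ l ∈ range nL,
      (P1 p * QB.D1 (P1 s) j) ⊗ₜ[k] ((P2 p * QB.D2 (P1 s) j) ⊗ₜ[k]
        ((l1 (P3 p) l * P2 s) ⊗ₜ[k] (l0 (P3 p) l * P3 s)))
  lca3 : ∀ b, ∑ i ∈ range nL, QB.counit (l1 b i) • l0 b i = b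
  lca4a : ∑ s ∈ range nP, QB.counit (P2 s) • (P1 s ⊗ₜ[k] P3 s) = (1 : H) ⊗ₜ[k] (1 : B)
  lca4b : ∑ s ∈ range nP, QB.counit (P1 s) • (P2 s ⊗ₜ[k] P3 s) = (1 : H) ⊗ₜ[k] (1 : B)

/-- An algebra in the monoidal category of left `H`-modules
(a left `H`-module algebra), on a carrier `V`. -/
structure LeftModuleAlgebra {k : Type*} [Field k] {H : Type*} [Ring H] [Algebra k H]
    (QB : QuasiBialgebra k H) (V : Type*) [AddCommMonoid V] [Module k V] where
  mul : V →ₗ[k] V →ₗ[k] V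
  one : V
  act : H →ₗ[k] V →ₗ[k] V
  act_one : ∀ v, act 1 v = v
  act_mul : ∀ g h v, act (g * h) v = act g (act h v)
  mul_one : ∀ v, mul v one = v
  one_mul : ∀ v, mul one v = v
  mul_assoc : ∀ u v w, mul (mul u v) w =
    ∑ s ∈ range QB.nP, mul (act (QB.X1 s) u) (mul (act (QB.X2 s) v) (act (QB.X3 s) w))
  act_mul_mul : ∀ h u v, act h (mul u v) =
    ∑ i ∈ range QB.nD, mul (act (QB.D1 h i) u) (act (QB.D2 h i) v)
  act_unit : ∀ h, act h one = QB.counit h • one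

/-- The right action `φ ↦ h ⇀ φ`, `(h ⇀ φ)(h') = φ(h'h)`. -/
def rA (k : Type*) [Field k] {H : Type*} [Ring H] [Algebra k H] (h : H) :
    Module.Dual k H →ₗ[k] Module.Dual k H :=
  LinearMap.lcomp k k (LinearMap.mulRight k h)

/-- The left action `φ ↦ φ ↼ h`, `(φ ↼ h)(h') = φ(hh')`. -/
def lA (k : Type*) [Field k] {H : Type*} [Ring H] [Algebra k H] (h : H) :
    Module.Dual k H →ₗ[k] Module.Dual k H :=
  LinearMap.lcomp k k (LinearMap.mulLeft k h)

/-- Convolution product on the dual of a "coalgebra" with comultiplication `DC`. -/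
def convC {k : Type*} [Field k] {C : Type*} [AddCommGroup C] [Module k C]
    (DC : C →ₗ[k] C ⊗[k] C) (φ ψ : Module.Dual k C) : Module.Dual k C :=
  (TensorProduct.lid k k).toLinearMap ∘ₗ (TensorProduct.map φ ψ) ∘ₗ DC

/-- A two-sided `(𝔄, H)`-Hopf module. -/
structure TwoSidedHopfModule {k : Type*} [Field k] {H : Type*} [Ring H] [Algebra k H]
    (QB : QuasiBialgebra k H) {A : Type*} [Ring A] [Algebra k A]
    (CA : RightComoduleAlgebra QB A) (M : Type*) [AddCommGroup M] [Module k M] where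
  ha : H →ₗ[k] M →ₗ[k] M
  ha_one : ∀ m, ha 1 m = m
  ha_mul : ∀ g h m, ha (g * h) m = ha g (ha h m)
  ra : A →ₗ[k] M →ₗ[k] M
  ra_one : ∀ m, ra 1 m = m
  ra_mul : ∀ a b m, ra (a * b) m = ra b (ra a m)
  ha_ra : ∀ h a m, ha h (ra a m) = ra a (ha h m)
  rho : M →ₗ[k] M ⊗[k] H
  counit_rho : ∀ m,
    (TensorProduct.rid k M) ((TensorProduct.map LinearMap.id QB.counit.toLinearMap) (rho m)) = m
  coassoc_rho : ∀ m,
    ∑ s ∈ range QB.nP,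
      (TensorProduct.map (ha (QB.X1 s))
        (TensorProduct.map (LinearMap.mulLeft k (QB.X2 s)) (LinearMap.mulLeft k (QB.X3 s))))
        ((TensorProduct.assoc k M H H) ((TensorProduct.map rho LinearMap.id) (rho m))) =
    ∑ j ∈ range CA.nP,
      (TensorProduct.map (ra (CA.P1 j))
        (TensorProduct.map (LinearMap.mulRight k (CA.P2 j)) (LinearMap.mulRight k (CA.P3 j))))
        ((TensorProduct.map LinearMap.id QB.comul.toLinearMap) (rho m))
  colin_l : ∀ h m, rho (ha h m) =
    ∑ i ∈ range QB.nD,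
      (TensorProduct.map (ha (QB.D1 h i)) (LinearMap.mulLeft k (QB.D2 h i))) (rho m)
  colin_r : ∀ a m, rho (ra a m) =
    ∑ i ∈ range CA.nR,
      (TensorProduct.map (ra (CA.r0 a i)) (LinearMap.mulRight k (CA.r1 a i))) (rho m)

/-- A right `(H^*, A)`-Hopf module over a left `H`-module algebra `A` (carrier `V`). -/
structure RelHopfModule {k : Type*} [Field k] {H : Type*} [Ring H] [Algebra k H]
    (QB : QuasiBialgebra k H) {V : Type*} [AddCommMonoid V] [Module k V]
    (MA : LeftModuleAlgebra QB V) (M : Type*) [AddCommGroup M] [Module k M] where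
  hb : H →ₗ[k] M →ₗ[k] M
  hb_one : ∀ m, hb 1 m = m
  hb_mul : ∀ g h m, hb (g * h) m = hb g (hb h m)
  rb : V →ₗ[k] M →ₗ[k] M
  rb_one : ∀ m, rb MA.one m = m
  rb_assoc : ∀ m u v, rb v (rb u m) =
    ∑ s ∈ range QB.nP, rb (MA.mul (MA.act (QB.X2 s) u) (MA.act (QB.X3 s) v)) (hb (QB.X1 s) m)
  hb_rb : ∀ h u m, hb h (rb u m) =
    ∑ i ∈ range QB.nD, rb (MA.act (QB.D2 h i) u) (hb (QB.D1 h i) m)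

/-- A right module over the (possibly nonassociative) algebra `(V, mul, one)`. -/
structure RightAlgModule (k : Type*) [Field k] {V : Type*} [AddCommMonoid V] [Module k V]
    (mul : V →ₗ[k] V →ₗ[k] V) (one : V) (N : Type*) [AddCommGroup N] [Module k N] where
  ract : V →ₗ[k] N →ₗ[k] N
  ract_one : ∀ n, ract one n = n
  ract_mul : ∀ u v n, ract (mul u v) n = ract v (ract u n)

/-- A left `H'`-comodule algebra structure on a carrier `V` equipped with a
(bilinear, possibly nonassociative) multiplication `mulV` and unit `oneV`. -/
structure LeftComoduleAlgebraS {k : Type*} [Field k] {H' : Type*} [Ring H'] [Algebra k H']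
    (QB : QuasiBialgebra k H') (V : Type*) [AddCommMonoid V] [Module k V]
    (mulV : V →ₗ[k] V →ₗ[k] V) (oneV : V) where
  lam : V →ₗ[k] H' ⊗[k] V
  nL : ℕ
  l1 : V → ℕ → H'
  l0 : V → ℕ → V
  hlam : ∀ v, lam v = ∑ i ∈ range nL, l1 v i ⊗ₜ[k] l0 v i
  lam_one : lam oneV = (1 : H') ⊗ₜ[k] oneV
  lam_mul : ∀ u v, lam (mulV u v) =
    ∑ i ∈ range nL, ∑ j ∈ range nL, (l1 u i * l1 v j) ⊗ₜ[k] mulV (l0 u i) (l0 v j)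
  nP : ℕ
  P1 : ℕ → H'
  P2 : ℕ → H'
  P3 : ℕ → V
  nQ : ℕ
  Q1 : ℕ → H'
  Q2 : ℕ → H'
  Q3 : ℕ → V
  P_inv : ∑ s ∈ range nP, ∑ q ∈ range nQ,
      (P1 s * Q1 q) ⊗ₜ[k] ((P2 s * Q2 q) ⊗ₜ[k] mulV (P3 s) (Q3 q)) =
      (1 : H') ⊗ₜ[k] ((1 : H') ⊗ₜ[k] oneV)
  inv_P : ∑ q ∈ range nQ, ∑ s ∈ range nP,
      (Q1 q * P1 s) ⊗ₜ[k] ((Q2 q * P2 s) ⊗ₜ[k] mulV (Q3 q) (P3 s)) =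
      (1 : H') ⊗ₜ[k] ((1 : H') ⊗ₜ[k] oneV)
  lca1 : ∀ v : V,
    ∑ i ∈ range nL, ∑ l ∈ range nL, ∑ s ∈ range nP,
      (l1 v i * P1 s) ⊗ₜ[k] ((l1 (l0 v i) l * P2 s) ⊗ₜ[k] mulV (l0 (l0 v i) l) (P3 s)) =
    ∑ s ∈ range nP, ∑ i ∈ range nL, ∑ l ∈ range QB.nD,
      (P1 s * QB.D1 (l1 v i) l) ⊗ₜ[k] ((P2 s * QB.D2 (l1 v i) l) ⊗ₜ[k] mulV (P3 s) (l0 v i))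
  lca2 :
    ∑ p ∈ range nP, ∑ s ∈ range nP, ∑ l ∈ range QB.nD, ∑ r ∈ range QB.nP,
      (P1 s * QB.X1 r) ⊗ₜ[k] ((P1 p * QB.D1 (P2 s) l * QB.X2 r) ⊗ₜ[k]
        ((P2 p * QB.D2 (P2 s) l * QB.X3 r) ⊗ₜ[k] mulV (P3 p) (P3 s))) =
    ∑ p ∈ range nP, ∑ s ∈ range nP, ∑ j ∈ range QB.nD, ∑ l ∈ range nL,
      (P1 p * QB.D1 (P1 s) j) ⊗ₜ[k] ((P2 p * QB.D2 (P1 s) j) ⊗ₜ[k]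
        ((l1 (P3 p) l * P2 s) ⊗ₜ[k] mulV (l0 (P3 p) l) (P3 s)))
  lca3 : ∀ v, ∑ i ∈ range nL, QB.counit (l1 v i) • l0 v i = v
  lca4a : ∑ s ∈ range nP, QB.counit (P2 s) • (P1 s ⊗ₜ[k] P3 s) = (1 : H') ⊗ₜ[k] oneV
  lca4b : ∑ s ∈ range nP, QB.counit (P1 s) • (P2 s ⊗ₜ[k] P3 s) = (1 : H') ⊗ₜ[k] oneV

/-- A right-left Doi-Hopf module over the quasi-bialgebra `QB'`, a left comodule
algebra (given by its carrier `V`, multiplication data and coaction families) and a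
module coalgebra `C` (given by its comultiplication `DC`, counit `eC` and right
`H'`-action `actC`). -/
structure DoiHopfModule {k : Type*} [Field k] {H' : Type*} [Ring H'] [Algebra k H']
    (QB' : QuasiBialgebra k H') {V : Type*} [AddCommMonoid V] [Module k V]
    (mulV : V →ₗ[k] V →ₗ[k] V) (oneV : V)
    (nL : ℕ) (l1 : V → ℕ → H') (l0 : V → ℕ → V)
    (nPl : ℕ) (Pl1 Pl2 : ℕ → H') (Pl3 : ℕ → V)
    {C : Type*} [AddCommGroup C] [Module k C]
    (DC : C →ₗ[k] C ⊗[k] C) (eC : C →ₗ[k] k) (actC : H' →ₗ[k] C →ₗ[k] C)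
    (N : Type*) [AddCommGroup N] [Module k N] where
  ract : V →ₗ[k] N →ₗ[k] N
  ract_one : ∀ n, ract oneV n = n
  ract_mul : ∀ u v n, ract (mulV u v) n = ract v (ract u n)
  rhoN : N →ₗ[k] C ⊗[k] N
  dh2 : ∀ n, (TensorProduct.lid k N) ((TensorProduct.map eC LinearMap.id) (rhoN n)) = n
  dh1 : ∀ n,
    (TensorProduct.assoc k C C N) ((TensorProduct.map DC LinearMap.id) (rhoN n)) =
    ∑ j ∈ range nPl,
      (TensorProduct.map (actC (Pl1 j)) (TensorProduct.map (actC (Pl2 j)) (ract (Pl3 j))))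
        ((TensorProduct.map LinearMap.id rhoN) (rhoN n))
  dh3 : ∀ v n, rhoN (ract v n) =
    ∑ w ∈ range nL, (TensorProduct.map (actC (l1 v w)) (ract (l0 v w))) (rhoN n)

/-- A right `H`-module coalgebra, with Sweedler families for the comultiplication. -/
structure RightModuleCoalgebra {k : Type*} [Field k] {H : Type*} [Ring H] [Algebra k H]
    (QB : QuasiBialgebra k H) (C : Type*) [AddCommGroup C] [Module k C] where
  act : H →ₗ[k] C →ₗ[k] C
  act_one : ∀ c, act 1 c = c
  act_mul : ∀ g h c, act (g * h) c = act h (act g c)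
  DC : C →ₗ[k] C ⊗[k] C
  nC : ℕ
  C1 : C → ℕ → C
  C2 : C → ℕ → C
  hDC : ∀ c, DC c = ∑ i ∈ range nC, C1 c i ⊗ₜ[k] C2 c i
  eC : C →ₗ[k] k
  counit_l : ∀ c, ∑ i ∈ range nC, eC (C1 c i) • C2 c i = c
  counit_r : ∀ c, ∑ i ∈ range nC, eC (C2 c i) • C1 c i = c
  rmc1 : ∀ c : C,
    ∑ i ∈ range nC, ∑ j ∈ range nC, ∑ q ∈ range QB.nQ,
      act (QB.x1 q) (C1 (C1 c i) j) ⊗ₜ[k]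
        (act (QB.x2 q) (C2 (C1 c i) j) ⊗ₜ[k] act (QB.x3 q) (C2 c i)) =
    ∑ i ∈ range nC, ∑ j ∈ range nC,
      C1 c i ⊗ₜ[k] (C1 (C2 c i) j ⊗ₜ[k] C2 (C2 c i) j)
  rmc2 : ∀ c h,
    ∑ i ∈ range nC, C1 (act h c) i ⊗ₜ[k] C2 (act h c) i =
    ∑ i ∈ range nC, ∑ l ∈ range QB.nD,
      act (QB.D1 h l) (C1 c i) ⊗ₜ[k] act (QB.D2 h l) (C2 c i)
  rmc3 : ∀ c h, eC (act h c) = eC c * QB.counit h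

/-- An `H`-bimodule coalgebra: a coalgebra in the monoidal category of
`(H,H)`-bimodules, with Sweedler families. -/
structure HBimoduleCoalgebra {k : Type*} [Field k] {H : Type*} [Ring H] [Algebra k H]
    (QB : QuasiBialgebra k H) (C : Type*) [AddCommGroup C] [Module k C] where
  lact : H →ₗ[k] C →ₗ[k] C
  lact_one : ∀ c, lact 1 c = c
  lact_mul : ∀ g h c, lact (g * h) c = lact g (lact h c)
  ract : H →ₗ[k] C →ₗ[k] C
  ract_one : ∀ c, ract 1 c = c
  ract_mul : ∀ g h c, ract (g * h) c = ract h (ract g c)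
  lact_ract : ∀ g h c, lact g (ract h c) = ract h (lact g c)
  DC : C →ₗ[k] C ⊗[k] C
  nC : ℕ
  C1 : C → ℕ → C
  C2 : C → ℕ → C
  hDC : ∀ c, DC c = ∑ i ∈ range nC, C1 c i ⊗ₜ[k] C2 c i
  eC : C →ₗ[k] k
  counit_l : ∀ c, ∑ i ∈ range nC, eC (C1 c i) • C2 c i = c
  counit_r : ∀ c, ∑ i ∈ range nC, eC (C2 c i) • C1 c i = c
  bmc1 : ∀ c : C,
    ∑ s ∈ range QB.nP, ∑ i ∈ range nC, ∑ j ∈ range nC, ∑ q ∈ range QB.nQ,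
      lact (QB.X1 s) (ract (QB.x1 q) (C1 (C1 c i) j)) ⊗ₜ[k]
        (lact (QB.X2 s) (ract (QB.x2 q) (C2 (C1 c i) j)) ⊗ₜ[k]
          lact (QB.X3 s) (ract (QB.x3 q) (C2 c i))) =
    ∑ i ∈ range nC, ∑ j ∈ range nC,
      C1 c i ⊗ₜ[k] (C1 (C2 c i) j ⊗ₜ[k] C2 (C2 c i) j)
  bmc2l : ∀ c h,
    ∑ i ∈ range nC, C1 (lact h c) i ⊗ₜ[k] C2 (lact h c) i =
    ∑ l ∈ range QB.nD, ∑ i ∈ range nC,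
      lact (QB.D1 h l) (C1 c i) ⊗ₜ[k] lact (QB.D2 h l) (C2 c i)
  bmc2r : ∀ c h,
    ∑ i ∈ range nC, C1 (ract h c) i ⊗ₜ[k] C2 (ract h c) i =
    ∑ l ∈ range QB.nD, ∑ i ∈ range nC,
      ract (QB.D1 h l) (C1 c i) ⊗ₜ[k] ract (QB.D2 h l) (C2 c i)
  bmc3l : ∀ c h, eC (lact h c) = QB.counit h * eC c
  bmc3r : ∀ c h, eC (ract h c) = eC c * QB.counit h

/-- An `H`-bicomodule algebra `(𝔸, λ, ρ, Φ_λ, Φ_ρ, Φ_{λ,ρ})`. -/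
structure BicomoduleAlgebra {k : Type*} [Field k] {H : Type*} [Ring H] [Algebra k H]
    (QB : QuasiBialgebra k H) (A : Type*) [Ring A] [Algebra k A] where
  rca : RightComoduleAlgebra QB A
  lca : LeftComoduleAlgebra QB A
  nO : ℕ
  O1 : ℕ → H
  O2 : ℕ → A
  O3 : ℕ → H
  nW : ℕ
  w1 : ℕ → H
  w2 : ℕ → A
  w3 : ℕ → H
  O_inv : ∑ v ∈ range nO, ∑ w ∈ range nW,
      (O1 v * w1 w) ⊗ₜ[k] ((O2 v * w2 w) ⊗ₜ[k] (O3 v * w3 w)) =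
      (1 : H) ⊗ₜ[k] ((1 : A) ⊗ₜ[k] (1 : H))
  inv_O : ∑ w ∈ range nW, ∑ v ∈ range nO,
      (w1 w * O1 v) ⊗ₜ[k] ((w2 w * O2 v) ⊗ₜ[k] (w3 w * O3 v)) =
      (1 : H) ⊗ₜ[k] ((1 : A) ⊗ₜ[k] (1 : H))
  bca1 : ∀ a : A,
    ∑ v ∈ range nO, ∑ r ∈ range rca.nR, ∑ l ∈ range lca.nL,
      (O1 v * lca.l1 (rca.r0 a r) l) ⊗ₜ[k]
        ((O2 v * lca.l0 (rca.r0 a r) l) ⊗ₜ[k] (O3 v * rca.r1 a r)) =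
    ∑ l ∈ range lca.nL, ∑ r ∈ range rca.nR, ∑ v ∈ range nO,
      (lca.l1 a l * O1 v) ⊗ₜ[k]
        ((rca.r0 (lca.l0 a l) r * O2 v) ⊗ₜ[k] (rca.r1 (lca.l0 a l) r * O3 v))
  bca2 :
    ∑ v ∈ range nO, ∑ v' ∈ range nO, ∑ l ∈ range lca.nL, ∑ j ∈ range lca.nP,
      (O1 v' * lca.P1 j) ⊗ₜ[k] ((O1 v * lca.l1 (O2 v') l * lca.P2 j) ⊗ₜ[k]
        ((O2 v * lca.l0 (O2 v') l * lca.P3 j) ⊗ₜ[k] (O3 v * O3 v'))) =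
    ∑ j ∈ range lca.nP, ∑ v ∈ range nO, ∑ i ∈ range QB.nD, ∑ r ∈ range rca.nR,
      (lca.P1 j * QB.D1 (O1 v) i) ⊗ₜ[k] ((lca.P2 j * QB.D2 (O1 v) i) ⊗ₜ[k]
        ((rca.r0 (lca.P3 j) r * O2 v) ⊗ₜ[k] (rca.r1 (lca.P3 j) r * O3 v)))
  bca3 :
    ∑ s ∈ range rca.nP, ∑ v ∈ range nO, ∑ r ∈ range rca.nR, ∑ v' ∈ range nO,
      (O1 v * O1 v') ⊗ₜ[k] ((rca.P1 s * rca.r0 (O2 v) r * O2 v') ⊗ₜ[k]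
        ((rca.P2 s * rca.r1 (O2 v) r * O3 v') ⊗ₜ[k] (rca.P3 s * O3 v))) =
    ∑ v ∈ range nO, ∑ i ∈ range QB.nD, ∑ s ∈ range rca.nP, ∑ l ∈ range lca.nL,
      (O1 v * lca.l1 (rca.P1 s) l) ⊗ₜ[k] ((O2 v * lca.l0 (rca.P1 s) l) ⊗ₜ[k]
        ((QB.D1 (O3 v) i * rca.P2 s) ⊗ₜ[k] (QB.D2 (O3 v) i * rca.P3 s)))

/-- A two-sided two-cosided `(H, 𝔸, C)`-Hopf module. -/
structure TwoSidedTwoCosided {k : Type*} [Field k] {H : Type*} [Ring H] [Algebra k H]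
    (QB : QuasiBialgebra k H) {A : Type*} [Ring A] [Algebra k A]
    (BA : BicomoduleAlgebra QB A) {C : Type*} [AddCommGroup C] [Module k C]
    (lactC ractC : H →ₗ[k] C →ₗ[k] C) (DC : C →ₗ[k] C ⊗[k] C) (eC : C →ₗ[k] k)
    (N : Type*) [AddCommGroup N] [Module k N]
    extends TwoSidedHopfModule QB BA.rca N where
  rhoC : N →ₗ[k] C ⊗[k] N
  counit_rhoC : ∀ n,
    (TensorProduct.lid k N) ((TensorProduct.map eC LinearMap.id) (rhoC n)) = n
  tstc1 : ∀ n,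
    ∑ s ∈ range QB.nP,
      (TensorProduct.map (lactC (QB.X1 s))
        (TensorProduct.map (lactC (QB.X2 s)) (ha (QB.X3 s))))
        ((TensorProduct.assoc k C C N) ((TensorProduct.map DC LinearMap.id) (rhoC n))) =
    ∑ j ∈ range BA.lca.nP,
      (TensorProduct.map (ractC (BA.lca.P1 j))
        (TensorProduct.map (ractC (BA.lca.P2 j)) (ra (BA.lca.P3 j))))
        ((TensorProduct.map LinearMap.id rhoC) (rhoC n))
  tstc2 : ∀ n,
    ∑ s ∈ range QB.nP,
      (TensorProduct.map (lactC (QB.X1 s))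
        (TensorProduct.map (ha (QB.X2 s)) (LinearMap.mulLeft k (QB.X3 s))))
        ((TensorProduct.assoc k C N H) ((TensorProduct.map rhoC LinearMap.id) (rho n))) =
    ∑ v ∈ range BA.nO,
      (TensorProduct.map (ractC (BA.O1 v))
        (TensorProduct.map (ra (BA.O2 v)) (LinearMap.mulRight k (BA.O3 v))))
        ((TensorProduct.map LinearMap.id rho) (rhoC n))
  tstc3 : ∀ h n, rhoC (ha h n) =
    ∑ i ∈ range QB.nD,
      (TensorProduct.map (lactC (QB.D1 h i)) (ha (QB.D2 h i))) (rhoC n)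
  tstc4 : ∀ a n, rhoC (ra a n) =
    ∑ l ∈ range BA.lca.nL,
      (TensorProduct.map (ractC (BA.lca.l1 a l)) (ra (BA.lca.l0 a l))) (rhoC n)

/-!
An element of `𝔄 ⊗ H^*`, expanded along a basis of `𝔄`, is determined by its evaluations at the
elements of `H`. The product of `a ⊗ φ` and `b ⊗ ψ`, evaluated at `h`, is the slice by `φ ⊗ ψ` of
`(a ⊗ 1)(ρ(b) ⊗ 1)Φ_ρ⁻¹(1 ⊗ Δ(h))`, and acting by an element of `H` multiplies what is sliced on the
right, so every axiom becomes an identity in `𝔄 ⊗ H ⊗ ⋯ ⊗ H`. Associativity is the inverted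
pentagon for `Φ_ρ`, once coassociativity of `ρ` has moved `ρ(c)` past `Φ_ρ⁻¹` and that of `Δ` has
moved `Φ` past `Δ(h)`.
-/

section Slice

variable {R M V W X : Type*} [CommSemiring R] [AddCommMonoid M] [Module R M] [AddCommMonoid V]
  [Module R V] [AddCommMonoid W] [Module R W] [AddCommMonoid X] [Module R X]

/-- The slice map `id ⊗ φ : M ⊗ V → M`. -/
def sliceMap (φ : Module.Dual R V) : M ⊗[R] V →ₗ[R] M :=
  (TensorProduct.rid R M).toLinearMap ∘ₗ LinearMap.lTensor M φ

@[simp]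
lemma sliceMap_tmul (φ : Module.Dual R V) (m : M) (v : V) : sliceMap φ (m ⊗ₜ[R] v) = φ v • m := by
  simp [sliceMap]

lemma sliceMap_comp (φ : Module.Dual R W) (f : V →ₗ[R] W) (t : M ⊗[R] V) :
    sliceMap (φ ∘ₗ f) t = sliceMap φ (LinearMap.lTensor M f t) := by
  simp [sliceMap, LinearMap.lTensor_comp]

/-- Evaluation at `v` of an element of `M ⊗ V^*`, regarded as an `M`-valued function on `V`. -/
def evalAt (v : V) : M ⊗[R] Module.Dual R V →ₗ[R] M :=
  sliceMap (Module.Dual.eval R V v)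

@[simp]
lemma evalAt_tmul (v : V) (m : M) (φ : Module.Dual R V) : evalAt v (m ⊗ₜ[R] φ) = φ v • m := by
  simp [evalAt]

lemma evalAt_lTensor_dualMap (f : V →ₗ[R] W) (v : V) (u : M ⊗[R] Module.Dual R W) :
    evalAt v (LinearMap.lTensor M f.dualMap u) = evalAt (f v) u :=
  (sliceMap_comp _ _ u).symm

lemma ext_evalAt [Module.Free R M] {u u' : M ⊗[R] Module.Dual R V}
    (h : ∀ v, evalAt v u = evalAt v u') : u = u' := by
  let b := Module.Free.chooseBasis R M
  have coord_apply (w : M ⊗[R] Module.Dual R V) (i) (v : V) :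
      TensorProduct.equivFinsuppOfBasisLeft b w i v = b.coord i (evalAt v w) := by
    induction w with
    | zero => simp
    | add x y hx hy => simp [hx, hy]
    | tmul m φ => simp [mul_comm]
  refine (TensorProduct.equivFinsuppOfBasisLeft b).injective (Finsupp.ext fun i => ?_)
  ext v
  rw [coord_apply, coord_apply, h]

/-- The functional `φ ⊗ ψ` on `V ⊗ W`, bilinearly in `φ` and `ψ`. -/
def dualTensor : Module.Dual R V →ₗ[R] Module.Dual R W →ₗ[R] Module.Dual R (V ⊗[R] W) :=
  TensorProduct.curry (TensorProduct.dualDistrib R V W)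

@[simp]
lemma dualTensor_tmul (φ : Module.Dual R V) (ψ : Module.Dual R W) (v : V) (w : W) :
    dualTensor φ ψ (v ⊗ₜ[R] w) = φ v * ψ w := by
  simp [dualTensor]

lemma dualTensor_assoc_tmul (φ : Module.Dual R V)
    (ψ : Module.Dual R W) (χ : Module.Dual R X) (t : V ⊗[R] W) (x : X) :
    dualTensor φ (dualTensor ψ χ) (TensorProduct.assoc R V W X (t ⊗ₜ[R] x)) =
      dualTensor φ ψ t * χ x := by
  induction t with
  | zero => simp
  | add s t hs ht => simp only [add_tmul, map_add, add_mul, hs, ht]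
  | tmul v w => simp [mul_assoc]

end Slice

section Translate

variable {k A M V W : Type*} [Field k] [Ring A] [Algebra k A] [AddCommGroup M] [Module k M]
  [Ring V] [Algebra k V] [Ring W] [Algebra k W]

@[simp]
lemma lA_apply (v w : V) (φ : Module.Dual k V) : lA k v φ w = φ (v * w) := by
  simp [lA]

@[simp]
lemma rA_apply (v w : V) (φ : Module.Dual k V) : rA k v φ w = φ (w * v) := by
  simp [rA]

lemma lA_dualTensor (v : V) (w : W) (φ : Module.Dual k V) (ψ : Module.Dual k W) :
    lA k (v ⊗ₜ[k] w) (dualTensor φ ψ) = dualTensor (lA k v φ) (lA k w ψ) := by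
  ext
  simp

lemma rA_dualTensor (v : V) (w : W) (φ : Module.Dual k V) (ψ : Module.Dual k W) :
    rA k (v ⊗ₜ[k] w) (dualTensor φ ψ) = dualTensor (rA k v φ) (rA k w ψ) := by
  ext
  simp

lemma sliceMap_lA (v : V) (φ : Module.Dual k V) (t : A ⊗[k] V) :
    sliceMap (lA k v φ) t = sliceMap φ ((1 ⊗ₜ[k] v) * t) := by
  induction t with
  | zero => simp
  | add x y hx hy => simp only [map_add, mul_add, hx, hy]
  | tmul a w => simp

lemma sliceMap_rA (v : V) (φ : Module.Dual k V) (t : A ⊗[k] V) :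
    sliceMap (rA k v φ) t = sliceMap φ (t * (1 ⊗ₜ[k] v)) := by
  induction t with
  | zero => simp
  | add x y hx hy => simp only [map_add, add_mul, hx, hy]
  | tmul a w => simp

/-- The translate `φ ↼ v` as a bilinear map in `v` and `φ`. -/
def translateLeft : V →ₗ[k] Module.Dual k V →ₗ[k] Module.Dual k V :=
  LinearMap.mk₂ k (fun v => lA k v) (fun _ _ _ => by ext; simp [add_mul])
    (fun _ _ _ => by ext; simp) (fun _ => map_add _) (fun _ _ => map_smul _ _)

/-- The translate `v ⇀ φ` as a bilinear map in `v` and `φ`. -/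
def translateRight : V →ₗ[k] Module.Dual k V →ₗ[k] Module.Dual k V :=
  LinearMap.mk₂ k (fun v => rA k v) (fun _ _ _ => by ext; simp [mul_add])
    (fun _ _ _ => by ext; simp) (fun _ => map_add _) (fun _ _ => map_smul _ _)

/-- The bilinear map `(m ⊗ v, φ) ↦ m ⊗ (φ ↼ v)`. -/
def twist : M ⊗[k] V →ₗ[k] Module.Dual k V →ₗ[k] M ⊗[k] Module.Dual k V :=
  (LinearMap.lTensorHom M ∘ₗ translateLeft.flip).flip

@[simp]
lemma twist_tmul (m : M) (v : V) (φ : Module.Dual k V) :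
    twist (m ⊗ₜ[k] v) φ = m ⊗ₜ[k] lA k v φ :=
  rfl

lemma evalAt_twist (v : V) (t : A ⊗[k] V) (φ : Module.Dual k V) :
    evalAt v (twist t φ) = sliceMap φ (t * (1 ⊗ₜ[k] v)) := by
  induction t with
  | zero => simp
  | add x y hx hy => simp only [map_add, LinearMap.add_apply, add_mul, hx, hy]
  | tmul z w => simp

/-- The left action `v · (m ⊗ φ) = m ⊗ (v ⇀ φ)` of `V` on `M ⊗ V^*`. -/
def dualAct : V →ₗ[k] M ⊗[k] Module.Dual k V →ₗ[k] M ⊗[k] Module.Dual k V :=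
  LinearMap.lTensorHom M ∘ₗ translateRight

@[simp]
lemma dualAct_tmul (v : V) (m : M) (φ : Module.Dual k V) :
    dualAct v (m ⊗ₜ[k] φ) = m ⊗ₜ[k] rA k v φ :=
  rfl

lemma evalAt_dualAct (v w : V) (u : M ⊗[k] Module.Dual k V) :
    evalAt v (dualAct w u) = evalAt (v * w) u := by
  induction u with
  | zero => simp
  | add x y hx hy => simp only [map_add, hx, hy]
  | tmul m φ => simp

lemma dualAct_one (u : M ⊗[k] Module.Dual k V) : dualAct 1 u = u :=
  ext_evalAt fun v => by rw [evalAt_dualAct, mul_one]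

lemma dualAct_mul (v w : V) (u : M ⊗[k] Module.Dual k V) :
    dualAct (v * w) u = dualAct v (dualAct w u) :=
  ext_evalAt fun x => by simp only [evalAt_dualAct, mul_assoc]

lemma dualAct_tmul_algHom (v : V) (m : M) (χ : V →ₐ[k] k) :
    dualAct v (m ⊗ₜ[k] χ.toLinearMap) = χ v • (m ⊗ₜ[k] χ.toLinearMap) :=
  ext_evalAt fun w => by simp [smul_smul, mul_comm]

end Translate

lemma convC_eq_dualTensor_comp {k V : Type*} [Field k] [AddCommGroup V] [Module k V]
    (D : V →ₗ[k] V ⊗[k] V) (φ ψ : Module.Dual k V) :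
    convC D φ ψ = dualTensor φ ψ ∘ₗ D := by
  rw [convC, ← LinearMap.comp_assoc]
  congr 1

section TensorAlgHom

variable {R A B C D H : Type*} [CommSemiring R] [Semiring A] [Algebra R A] [Semiring B]
  [Algebra R B] [Semiring C] [Algebra R C] [Semiring D] [Algebra R D] [Semiring H] [Algebra R H]

/-- The algebra map `id ⊗ g : A ⊗ B → A ⊗ C`. -/
abbrev mapSecond (A : Type*) [Semiring A] [Algebra R A] (g : B →ₐ[R] C) : A ⊗[R] B →ₐ[R] A ⊗[R] C :=
  Algebra.TensorProduct.map (AlgHom.id R A) g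

/-- The algebra map `a ⊗ b ↦ a ⊗ (b ⊗ 1)`. -/
abbrev appendOne (A B C : Type*) [Semiring A] [Algebra R A] [Semiring B] [Algebra R B] [Semiring C]
    [Algebra R C] : A ⊗[R] B →ₐ[R] A ⊗[R] (B ⊗[R] C) :=
  mapSecond A Algebra.TensorProduct.includeLeft

lemma mapSecond_mapSecond_appendOne (g : B →ₐ[R] C) (t : A ⊗[R] H) :
    mapSecond A (mapSecond H g) (appendOne A H B t) = appendOne A H C t := by
  induction t with
  | zero => simp
  | add x y hx hy => simp only [map_add, hx, hy]
  | tmul a h => simp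

/-- The algebra map `f ⊗ id : A ⊗ B → D ⊗ (H ⊗ B)` of `f : A → D ⊗ H`, reassociated. -/
def mapFirst (f : A →ₐ[R] D ⊗[R] H) (B : Type*) [Semiring B] [Algebra R B] :
    A ⊗[R] B →ₐ[R] D ⊗[R] (H ⊗[R] B) :=
  (Algebra.TensorProduct.assoc R R R D H B).toAlgHom.comp
    (Algebra.TensorProduct.map f (AlgHom.id R B))

lemma mapFirst_tmul (f : A →ₐ[R] D ⊗[R] H) (a : A) (b : B) :
    mapFirst f B (a ⊗ₜ[R] b) = TensorProduct.assoc R D H B (f a ⊗ₜ[R] b) :=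
  rfl

lemma mapFirst_one_tmul (f : A →ₐ[R] D ⊗[R] H) (b : B) :
    mapFirst f B (1 ⊗ₜ[R] b) = 1 ⊗ₜ[R] (1 ⊗ₜ[R] b) := by
  rw [mapFirst_tmul, map_one, Algebra.TensorProduct.one_def, TensorProduct.assoc_tmul]

lemma mapFirst_tmul_one (f : A →ₐ[R] D ⊗[R] H) (a : A) :
    mapFirst f B (a ⊗ₜ[R] 1) = appendOne D H B (f a) := by
  rw [mapFirst_tmul]
  induction f a with
  | zero => simp
  | add x y hx hy => simp only [add_tmul, map_add, hx, hy]
  | tmul x g => simp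

lemma mapFirst_mapSecond (f : A →ₐ[R] D ⊗[R] H) (g : B →ₐ[R] C) (t : A ⊗[R] B) :
    mapFirst f C (mapSecond A g t) = mapSecond D (mapSecond H g) (mapFirst f B t) := by
  induction t with
  | zero => simp
  | add x y hx hy => simp only [map_add, hx, hy]
  | tmul a b =>
    simp only [Algebra.TensorProduct.map_tmul, mapFirst_tmul, AlgHom.id_apply]
    induction f a with
    | zero => simp
    | add x y hx hy => simp only [add_tmul, map_add, hx, hy]
    | tmul x h => simp

lemma mapSecond_mapFirst_appendOne (f : B →ₐ[R] D ⊗[R] H) (t : A ⊗[R] B) :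
    mapSecond A (mapFirst f C) (appendOne A B C t) =
      mapSecond A (appendOne D H C) (mapSecond A f t) := by
  induction t with
  | zero => simp
  | add x y hx hy => simp only [map_add, hx, hy]
  | tmul a b =>
    simp only [Algebra.TensorProduct.map_tmul, Algebra.TensorProduct.includeLeft_apply,
      mapFirst_tmul_one]

/-- The group homomorphism induced on units by an algebra map. -/
abbrev mapUnits (f : B →ₐ[R] C) : Bˣ →* Cˣ := Units.map (f : B →* C)

end TensorAlgHom

namespace QuasiBialgebra

variable {k H : Type*} [Field k] [Ring H] [Algebra k H] (QB : QuasiBialgebra k H)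

/-- The reassociator `Φ` as a unit of `H ⊗ (H ⊗ H)`. -/
def reassociator : (H ⊗[k] (H ⊗[k] H))ˣ where
  val := ∑ s ∈ range QB.nP, QB.X1 s ⊗ₜ (QB.X2 s ⊗ₜ QB.X3 s)
  inv := ∑ s ∈ range QB.nQ, QB.x1 s ⊗ₜ (QB.x2 s ⊗ₜ QB.x3 s)
  val_inv := by simpa [sum_mul_sum, Algebra.TensorProduct.one_def] using QB.P_inv
  inv_val := by simpa [sum_mul_sum, Algebra.TensorProduct.one_def] using QB.inv_P

lemma semiconjBy_reassociator (h : H) :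
    SemiconjBy (QB.reassociator : H ⊗[k] (H ⊗[k] H)) (mapFirst QB.comul H (QB.comul h))
      (mapSecond H QB.comul (QB.comul h)) := by
  have conj : mapSecond H QB.comul (QB.comul h) =
      QB.reassociator * (mapFirst QB.comul H (QB.comul h) * ↑QB.reassociator⁻¹) := by
    have coassoc := QB.coassoc h
    simp only [mapFirst_tmul, QB.hcomul, reassociator, Units.inv_mk, map_sum, tmul_sum, sum_tmul,
      sum_mul, Algebra.TensorProduct.map_tmul, AlgHom.id_apply, TensorProduct.assoc_tmul]
    simp only [mul_sum, Algebra.TensorProduct.tmul_mul_tmul]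
    simpa only [mul_assoc] using coassoc
  rw [conj, ← mul_assoc]
  exact Units.mk_semiconjBy _ _

lemma dualTensor_lA_comp_comul_left (t : H ⊗[k] H) (φ ψ χ : Module.Dual k H) :
    dualTensor (lA k t (dualTensor φ ψ) ∘ₗ QB.comul.toLinearMap) χ =
      lA k (appendOne H H H t) (dualTensor φ (dualTensor ψ χ)) ∘ₗ
        (mapFirst QB.comul H).toLinearMap := by
  have appendOne_eq : appendOne H H H t =
      Algebra.TensorProduct.assoc k k k H H H (t ⊗ₜ[k] 1) := by
    induction t with
    | zero => simp
    | add x y hx hy => simp only [add_tmul, map_add, hx, hy]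
    | tmul x y => simp
  ext g g'
  calc dualTensor φ ψ (t * QB.comul g) * χ g'
      = dualTensor φ (dualTensor ψ χ)
          (Algebra.TensorProduct.assoc k k k H H H ((t ⊗ₜ[k] 1) * (QB.comul g ⊗ₜ[k] g'))) := by
        rw [Algebra.TensorProduct.tmul_mul_tmul, one_mul]
        exact (dualTensor_assoc_tmul _ _ _ _ _).symm
    _ = dualTensor φ (dualTensor ψ χ) (appendOne H H H t * mapFirst QB.comul H (g ⊗ₜ[k] g')) := by
        rw [map_mul, appendOne_eq, mapFirst_tmul]
        rfl

lemma dualTensor_lA_comp_comul_right (t : H ⊗[k] H) (φ ψ χ : Module.Dual k H) :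
    dualTensor φ (lA k t (dualTensor ψ χ) ∘ₗ QB.comul.toLinearMap) =
      lA k (1 ⊗ₜ[k] t) (dualTensor φ (dualTensor ψ χ)) ∘ₗ
        (mapSecond H QB.comul).toLinearMap := by
  ext g g'
  simp

/-- The algebra map `id ⊗ ε : H ⊗ H → H`. -/
def counitRight : H ⊗[k] H →ₐ[k] H :=
  (Algebra.TensorProduct.rid k k H).toAlgHom.comp (mapSecond H QB.counit)

/-- The algebra map `ε ⊗ id : H ⊗ H → H`. -/
def counitLeft : H ⊗[k] H →ₐ[k] H :=
  (Algebra.TensorProduct.lid k H).toAlgHom.comp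
    (Algebra.TensorProduct.map QB.counit (AlgHom.id k H))

@[simp]
lemma counitRight_tmul (g h : H) : QB.counitRight (g ⊗ₜ[k] h) = QB.counit h • g := by
  simp [counitRight]

@[simp]
lemma counitLeft_tmul (g h : H) : QB.counitLeft (g ⊗ₜ[k] h) = QB.counit g • h := by
  simp [counitLeft]

lemma counitRight_comul (h : H) : QB.counitRight (QB.comul h) = h := by
  simpa [QB.hcomul] using QB.counit_r h

lemma counitLeft_comul (h : H) : QB.counitLeft (QB.comul h) = h := by
  simpa [QB.hcomul] using QB.counit_l h

lemma dualTensor_counit_right (φ : Module.Dual k H) :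
    dualTensor φ QB.counit.toLinearMap = φ ∘ₗ QB.counitRight.toLinearMap := by
  ext
  simp [mul_comm]

lemma dualTensor_counit_left (φ : Module.Dual k H) :
    dualTensor QB.counit.toLinearMap φ = φ ∘ₗ QB.counitLeft.toLinearMap := by
  ext
  simp

end QuasiBialgebra

namespace RightComoduleAlgebra

variable {k H A : Type*} [Field k] [Ring H] [Algebra k H] [Ring A] [Algebra k A]
  {QB : QuasiBialgebra k H} (CA : RightComoduleAlgebra QB A)

/-- The reassociator `Φ_ρ` as a unit of `A ⊗ (H ⊗ H)`. -/
def reassociator : (A ⊗[k] (H ⊗[k] H))ˣ where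
  val := ∑ s ∈ range CA.nP, CA.P1 s ⊗ₜ (CA.P2 s ⊗ₜ CA.P3 s)
  inv := ∑ s ∈ range CA.nQ, CA.Q1 s ⊗ₜ (CA.Q2 s ⊗ₜ CA.Q3 s)
  val_inv := by simpa [sum_mul_sum, Algebra.TensorProduct.one_def] using CA.P_inv
  inv_val := by simpa [sum_mul_sum, Algebra.TensorProduct.one_def] using CA.inv_P

lemma semiconjBy_reassociator (a : A) :
    SemiconjBy (CA.reassociator : A ⊗[k] (H ⊗[k] H)) (mapFirst CA.rho H (CA.rho a))
      (mapSecond A QB.comul (CA.rho a)) := by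
  have coassoc := CA.rca1 a
  simp only [SemiconjBy, mapFirst_tmul, CA.hrho, QB.hcomul, reassociator, map_sum, tmul_sum,
    sum_tmul, sum_mul, Algebra.TensorProduct.map_tmul, AlgHom.id_apply, TensorProduct.assoc_tmul]
  simpa only [mul_sum, Algebra.TensorProduct.tmul_mul_tmul] using coassoc

lemma pentagon :
    mapUnits Algebra.TensorProduct.includeRight QB.reassociator *
        (mapUnits (mapSecond A (mapFirst QB.comul H)) CA.reassociator *
          mapUnits (mapSecond A (appendOne (R := k) H H H)) CA.reassociator) =
      mapUnits (mapSecond A (mapSecond H QB.comul)) CA.reassociator *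
        mapUnits (mapFirst CA.rho (H ⊗[k] H)) CA.reassociator := by
  have rca2 := CA.rca2
  ext
  simp only [Units.val_mul, Units.coe_map, MonoidHom.coe_coe,
    Algebra.TensorProduct.includeRight_apply, mapFirst_tmul,
    QuasiBialgebra.reassociator, reassociator, CA.hrho, QB.hcomul,
    map_sum, tmul_sum, sum_tmul, sum_mul, Algebra.TensorProduct.map_tmul, AlgHom.id_apply,
    Algebra.TensorProduct.includeLeft_apply, TensorProduct.assoc_tmul]
  simpa only [mul_sum, Algebra.TensorProduct.tmul_mul_tmul, one_mul, mul_one, mul_assoc] using rca2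

lemma pentagon_inv :
    mapFirst CA.rho (H ⊗[k] H) CA.reassociator⁻¹.val *
        mapSecond A (mapSecond H QB.comul) CA.reassociator⁻¹.val *
        (1 ⊗ₜ[k] QB.reassociator.val) =
      mapSecond A (appendOne (R := k) H H H) CA.reassociator⁻¹.val *
        mapSecond A (mapFirst QB.comul H) CA.reassociator⁻¹.val := by
  refine congrArg Units.val (?_ :
    mapUnits (mapFirst CA.rho (H ⊗[k] H)) CA.reassociator⁻¹ *
        mapUnits (mapSecond A (mapSecond H QB.comul)) CA.reassociator⁻¹ *
        mapUnits Algebra.TensorProduct.includeRight QB.reassociator =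
      mapUnits (mapSecond A (appendOne (R := k) H H H)) CA.reassociator⁻¹ *
        mapUnits (mapSecond A (mapFirst QB.comul H)) CA.reassociator⁻¹)
  simp only [map_inv]
  rw [← mul_inv_rev, ← pentagon]
  group

lemma mapSecond_counitRight_reassociator_inv :
    mapSecond A QB.counitRight CA.reassociator⁻¹.val = 1 := by
  have normalized : mapUnits (mapSecond A QB.counitRight) CA.reassociator = 1 := by
    ext
    simpa [reassociator, Algebra.TensorProduct.one_def] using CA.rca4b
  have inv_normalized : mapUnits (mapSecond A QB.counitRight) CA.reassociator⁻¹ = 1 := by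
    rw [map_inv, normalized, inv_one]
  exact congrArg Units.val inv_normalized

lemma mapSecond_counitLeft_reassociator_inv :
    mapSecond A QB.counitLeft CA.reassociator⁻¹.val = 1 := by
  have normalized : mapUnits (mapSecond A QB.counitLeft) CA.reassociator = 1 := by
    ext
    simpa [reassociator, Algebra.TensorProduct.one_def, smul_tmul'] using CA.rca4a
  have inv_normalized : mapUnits (mapSecond A QB.counitLeft) CA.reassociator⁻¹ = 1 := by
    rw [map_inv, normalized, inv_one]
  exact congrArg Units.val inv_normalized

lemma mapSecond_counitLeft_appendOne_rho (a : A) :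
    mapSecond A QB.counitLeft (appendOne A H H (CA.rho a)) = a ⊗ₜ[k] 1 := by
  conv_rhs => rw [← CA.rca3 a]
  simp [CA.hrho, sum_tmul, smul_tmul']

/-- The element `∑ a b⟨0⟩ x̃¹ ⊗ b⟨1⟩ x̃² ⊗ x̃³` of `A ⊗ (H ⊗ H)`, bilinearly in `a` and `b`. -/
def smashKernel : A →ₗ[k] A →ₗ[k] A ⊗[k] (H ⊗[k] H) :=
  ((LinearMap.mul k (A ⊗[k] (H ⊗[k] H))).compl₁₂
    Algebra.TensorProduct.includeLeft.toLinearMap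
    ((appendOne A H H).comp CA.rho).toLinearMap).compr₂
    (LinearMap.mulRight k CA.reassociator⁻¹.val)

lemma smashKernel_apply (a b : A) :
    CA.smashKernel a b =
      (a ⊗ₜ[k] 1) * appendOne A H H (CA.rho b) * CA.reassociator⁻¹.val :=
  rfl

/-- The quasi-smash product multiplication on `A ⊗ H^*`: the `H ⊗ H`-component of the kernel
translates `φ ⊗ ψ`, which is then pulled back along `Δ`. -/
def smashMul : A ⊗[k] Module.Dual k H →ₗ[k] A ⊗[k] Module.Dual k H →ₗ[k] A ⊗[k] Module.Dual k H :=
  (TensorProduct.map₂ CA.smashKernel dualTensor).compr₂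
    (LinearMap.lTensor A QB.comul.toLinearMap.dualMap ∘ₗ TensorProduct.lift twist)

lemma smashMul_tmul (a b : A) (φ ψ : Module.Dual k H) :
    CA.smashMul (a ⊗ₜ[k] φ) (b ⊗ₜ[k] ψ) =
      LinearMap.lTensor A QB.comul.toLinearMap.dualMap
        (twist (CA.smashKernel a b) (dualTensor φ ψ)) :=
  rfl

lemma smashMul_tmul_eq_sum (a a' : A) (φ ψ : Module.Dual k H) :
    CA.smashMul (a ⊗ₜ[k] φ) (a' ⊗ₜ[k] ψ) =
      ∑ i ∈ range CA.nR, ∑ j ∈ range CA.nQ, (a * CA.r0 a' i * CA.Q1 j) ⊗ₜ[k]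
        convC QB.comul.toLinearMap (lA k (CA.r1 a' i * CA.Q2 j) φ) (lA k (CA.Q3 j) ψ) := by
  simp only [convC_eq_dualTensor_comp, ← lA_dualTensor]
  simp only [smashMul_tmul, smashKernel_apply, CA.hrho, reassociator, Units.inv_mk, map_sum,
    mul_assoc, sum_mul, Algebra.TensorProduct.map_tmul, AlgHom.id_apply,
    Algebra.TensorProduct.includeLeft_apply]
  simp only [mul_sum, map_sum, LinearMap.sum_apply, Algebra.TensorProduct.tmul_mul_tmul, one_mul,
    twist_tmul, LinearMap.lTensor_tmul]
  rfl

lemma evalAt_smashMul_tmul (h : H) (a b : A) (φ ψ : Module.Dual k H) :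
    evalAt h (CA.smashMul (a ⊗ₜ[k] φ) (b ⊗ₜ[k] ψ)) =
      sliceMap (dualTensor φ ψ) (CA.smashKernel a b * (1 ⊗ₜ[k] QB.comul h)) := by
  rw [smashMul_tmul, evalAt_lTensor_dualMap, evalAt_twist]
  rfl

lemma evalAt_smashMul_smashMul_left (h : H) (a b c : A) (φ ψ χ : Module.Dual k H) :
    evalAt h (CA.smashMul (CA.smashMul (a ⊗ₜ[k] φ) (b ⊗ₜ[k] ψ)) (c ⊗ₜ[k] χ)) =
      sliceMap (dualTensor φ (dualTensor ψ χ))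
        (mapSecond A (appendOne H H H) (CA.smashKernel a b) *
          mapSecond A (mapFirst QB.comul H)
            (appendOne A H H (CA.rho c) * CA.reassociator⁻¹.val * (1 ⊗ₜ[k] QB.comul h))) := by
  rw [smashMul_tmul]
  induction CA.smashKernel a b with
  | zero => simp
  | add s t hs ht => simp only [map_add, LinearMap.add_apply, add_mul, hs, ht]
  | tmul z t =>
    set S := appendOne A H H (CA.rho c) * CA.reassociator⁻¹.val * (1 ⊗ₜ[k] QB.comul h)
    calc evalAt h (CA.smashMul
          (z ⊗ₜ[k] (lA k t (dualTensor φ ψ) ∘ₗ QB.comul.toLinearMap)) (c ⊗ₜ[k] χ))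
        = sliceMap (dualTensor (lA k t (dualTensor φ ψ) ∘ₗ QB.comul.toLinearMap) χ)
            ((z ⊗ₜ[k] 1) * S) := by
          simp only [evalAt_smashMul_tmul, smashKernel_apply, mul_assoc, S]
      _ = sliceMap (dualTensor φ (dualTensor ψ χ)) ((1 ⊗ₜ[k] appendOne H H H t) *
            mapSecond A (mapFirst QB.comul H) ((z ⊗ₜ[k] 1) * S)) := by
          rw [QB.dualTensor_lA_comp_comul_left, sliceMap_comp, sliceMap_lA]
          rfl
      _ = sliceMap (dualTensor φ (dualTensor ψ χ))
            (mapSecond A (appendOne H H H) (z ⊗ₜ[k] t) * mapSecond A (mapFirst QB.comul H) S) := by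
          rw [map_mul (mapSecond A (mapFirst QB.comul H)), ← mul_assoc,
            Algebra.TensorProduct.map_tmul, map_one, Algebra.TensorProduct.tmul_mul_tmul,
            one_mul, mul_one]
          rfl

lemma evalAt_smashMul_smashMul_right (h : H) (a b c : A) (φ ψ χ : Module.Dual k H) :
    evalAt h (CA.smashMul (a ⊗ₜ[k] φ) (CA.smashMul (b ⊗ₜ[k] ψ) (c ⊗ₜ[k] χ))) =
      sliceMap (dualTensor φ (dualTensor ψ χ))
        ((a ⊗ₜ[k] 1) * mapFirst CA.rho (H ⊗[k] H) (CA.smashKernel b c) *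
          mapSecond A (mapSecond H QB.comul)
            (CA.reassociator⁻¹.val * (1 ⊗ₜ[k] QB.comul h))) := by
  rw [smashMul_tmul CA b c]
  induction CA.smashKernel b c with
  | zero => simp
  | add s t hs ht => simp only [map_add, LinearMap.add_apply, mul_add, add_mul, hs, ht]
  | tmul z t =>
    set S := CA.reassociator⁻¹.val * (1 ⊗ₜ[k] QB.comul h)
    calc evalAt h (CA.smashMul (a ⊗ₜ[k] φ)
          (z ⊗ₜ[k] (lA k t (dualTensor ψ χ) ∘ₗ QB.comul.toLinearMap)))
        = sliceMap (dualTensor φ (lA k t (dualTensor ψ χ) ∘ₗ QB.comul.toLinearMap))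
            ((a ⊗ₜ[k] 1) * appendOne A H H (CA.rho z) * S) := by
          simp only [evalAt_smashMul_tmul, smashKernel_apply, mul_assoc, S]
      _ = sliceMap (dualTensor φ (dualTensor ψ χ)) ((1 ⊗ₜ[k] (1 ⊗ₜ[k] t)) *
            mapSecond A (mapSecond H QB.comul)
              ((a ⊗ₜ[k] 1) * appendOne A H H (CA.rho z) * S)) := by
          rw [QB.dualTensor_lA_comp_comul_right, sliceMap_comp, sliceMap_lA]
          rfl
      _ = sliceMap (dualTensor φ (dualTensor ψ χ))
            ((a ⊗ₜ[k] 1) * mapFirst CA.rho (H ⊗[k] H) (z ⊗ₜ[k] t) *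
              mapSecond A (mapSecond H QB.comul) S) := by
          have mapFirst_eq : mapFirst CA.rho (H ⊗[k] H) (z ⊗ₜ[k] t) =
              (1 ⊗ₜ[k] (1 ⊗ₜ[k] t)) * appendOne A H (H ⊗[k] H) (CA.rho z) := by
            rw [← mapFirst_one_tmul CA.rho, ← mapFirst_tmul_one, ← map_mul,
              Algebra.TensorProduct.tmul_mul_tmul, one_mul, mul_one]
          have comm : ((1 : A) ⊗ₜ[k] ((1 : H) ⊗ₜ[k] t)) * (a ⊗ₜ[k] 1) =
              (a ⊗ₜ[k] 1) * (1 ⊗ₜ[k] (1 ⊗ₜ[k] t)) := by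
            simp only [Algebra.TensorProduct.tmul_mul_tmul, one_mul, mul_one]
          rw [map_mul (mapSecond A (mapSecond H QB.comul)),
            map_mul (mapSecond A (mapSecond H QB.comul)), mapSecond_mapSecond_appendOne,
            Algebra.TensorProduct.map_tmul, map_one, AlgHom.id_apply, mapFirst_eq, ← mul_assoc,
            ← mul_assoc, ← mul_assoc, comm]

lemma smashKernel_pentagon (a b c : A) (h : H) :
    mapSecond A (appendOne H H H) (CA.smashKernel a b) *
        mapSecond A (mapFirst QB.comul H)
          (appendOne A H H (CA.rho c) * CA.reassociator⁻¹.val * (1 ⊗ₜ[k] QB.comul h)) =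
      (a ⊗ₜ[k] 1) * mapFirst CA.rho (H ⊗[k] H) (CA.smashKernel b c) *
        mapSecond A (mapSecond H QB.comul) (CA.reassociator⁻¹.val * (1 ⊗ₜ[k] QB.comul h)) *
        (1 ⊗ₜ[k] QB.reassociator.val) := by
  set ι := mapSecond A (appendOne (R := k) H H H)
  set F := mapFirst CA.rho (H ⊗[k] H)
  set L := mapSecond A (mapFirst QB.comul H)
  set R := mapSecond A (mapSecond H QB.comul)
  set α := CA.reassociator⁻¹.val
  set β : A ⊗[k] (H ⊗[k] (H ⊗[k] H)) := 1 ⊗ₜ[k] QB.reassociator.val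
  set δ : A ⊗[k] (H ⊗[k] H) := 1 ⊗ₜ[k] QB.comul h
  have rho_coassoc : ι α * L (appendOne A H H (CA.rho c)) =
      F (appendOne A H H (CA.rho c)) * ι α := by
    rw [mapSecond_mapFirst_appendOne, mapFirst_mapSecond]
    exact ((CA.semiconjBy_reassociator c).units_inv_symm_left.map ι).eq
  have comul_coassoc : β * L δ = R δ * β :=
    ((QB.semiconjBy_reassociator h).map Algebra.TensorProduct.includeRight).eq
  have pentagon : F α * R α * β = ι α * L α := CA.pentagon_inv
  have ι_kernel : ι (CA.smashKernel a b) = (a ⊗ₜ[k] 1) * F (b ⊗ₜ[k] 1) * ι α := by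
    rw [smashKernel_apply, map_mul, map_mul, Algebra.TensorProduct.map_tmul, map_one,
      mapSecond_mapSecond_appendOne, mapFirst_tmul_one]
    rfl
  calc ι (CA.smashKernel a b) * L (appendOne A H H (CA.rho c) * α * δ)
      = (a ⊗ₜ[k] 1) * F (b ⊗ₜ[k] 1) * (ι α * L (appendOne A H H (CA.rho c))) * L α * L δ := by
        rw [ι_kernel]
        simp only [map_mul, mul_assoc]
    _ = (a ⊗ₜ[k] 1) * F (b ⊗ₜ[k] 1) * F (appendOne A H H (CA.rho c)) * (ι α * L α) * L δ := by
        rw [rho_coassoc]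
        simp only [mul_assoc]
    _ = (a ⊗ₜ[k] 1) * F (CA.smashKernel b c) * R α * (β * L δ) := by
        rw [← pentagon, smashKernel_apply]
        simp only [map_mul, mul_assoc]
        rfl
    _ = (a ⊗ₜ[k] 1) * F (CA.smashKernel b c) * R (α * δ) * β := by
        rw [comul_coassoc]
        simp only [map_mul, mul_assoc]

lemma smashMul_assoc (u v w : A ⊗[k] Module.Dual k H) :
    CA.smashMul (CA.smashMul u v) w =
      ∑ s ∈ range QB.nP, CA.smashMul (dualAct (QB.X1 s) u)
        (CA.smashMul (dualAct (QB.X2 s) v) (dualAct (QB.X3 s) w)) := by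
  induction u with
  | zero => simp
  | add x y hx hy => simp only [map_add, LinearMap.add_apply, hx, hy, sum_add_distrib]
  | tmul a φ =>
  induction v with
  | zero => simp
  | add x y hx hy => simp only [map_add, LinearMap.add_apply, hx, hy, sum_add_distrib]
  | tmul b ψ =>
  induction w with
  | zero => simp
  | add x y hx hy => simp only [map_add, hx, hy, sum_add_distrib]
  | tmul c χ =>
  refine ext_evalAt fun h => ?_
  rw [evalAt_smashMul_smashMul_left, smashKernel_pentagon]
  simp only [dualAct_tmul, map_sum, evalAt_smashMul_smashMul_right, ← rA_dualTensor, sliceMap_rA,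
    QuasiBialgebra.reassociator, tmul_sum, mul_sum]

lemma dualAct_smashMul (h : H) (u v : A ⊗[k] Module.Dual k H) :
    dualAct h (CA.smashMul u v) =
      ∑ i ∈ range QB.nD, CA.smashMul (dualAct (QB.D1 h i) u) (dualAct (QB.D2 h i) v) := by
  induction u with
  | zero => simp
  | add x y hx hy => simp only [map_add, LinearMap.add_apply, hx, hy, sum_add_distrib]
  | tmul a φ =>
  induction v with
  | zero => simp
  | add x y hx hy => simp only [map_add, hx, hy, sum_add_distrib]
  | tmul b ψ =>
  refine ext_evalAt fun g => ?_
  have comul_mul : (1 : A) ⊗ₜ[k] QB.comul (g * h) =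
      (1 ⊗ₜ[k] QB.comul g) * (1 ⊗ₜ[k] QB.comul h) := by
    rw [map_mul, Algebra.TensorProduct.tmul_mul_tmul, one_mul]
  rw [evalAt_dualAct, evalAt_smashMul_tmul, comul_mul, ← mul_assoc]
  simp only [dualAct_tmul, map_sum, evalAt_smashMul_tmul, ← rA_dualTensor, sliceMap_rA, QB.hcomul h,
    tmul_sum, mul_sum]

lemma smashMul_one (u : A ⊗[k] Module.Dual k H) :
    CA.smashMul u (1 ⊗ₜ[k] QB.counit.toLinearMap) = u := by
  induction u with
  | zero => simp
  | add x y hx hy => simp only [map_add, LinearMap.add_apply, hx, hy]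
  | tmul a φ =>
  refine ext_evalAt fun h => ?_
  calc evalAt h (CA.smashMul (a ⊗ₜ[k] φ) (1 ⊗ₜ[k] QB.counit.toLinearMap))
      = sliceMap φ (mapSecond A QB.counitRight
          (CA.smashKernel a 1 * (1 ⊗ₜ[k] QB.comul h))) := by
        rw [evalAt_smashMul_tmul, QB.dualTensor_counit_right, sliceMap_comp]
        rfl
    _ = sliceMap φ (a ⊗ₜ[k] h) := by
        rw [smashKernel_apply, map_one, map_one, mul_one,
          map_mul (mapSecond A QB.counitRight), map_mul (mapSecond A QB.counitRight),
          mapSecond_counitRight_reassociator_inv, Algebra.TensorProduct.map_tmul,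
          Algebra.TensorProduct.map_tmul, QB.counitRight_comul]
        simp
    _ = evalAt h (a ⊗ₜ[k] φ) := by
        simp

lemma one_smashMul (u : A ⊗[k] Module.Dual k H) :
    CA.smashMul (1 ⊗ₜ[k] QB.counit.toLinearMap) u = u := by
  induction u with
  | zero => simp
  | add x y hx hy => simp only [map_add, hx, hy]
  | tmul a φ =>
  refine ext_evalAt fun h => ?_
  calc evalAt h (CA.smashMul (1 ⊗ₜ[k] QB.counit.toLinearMap) (a ⊗ₜ[k] φ))
      = sliceMap φ (mapSecond A QB.counitLeft
          (CA.smashKernel 1 a * (1 ⊗ₜ[k] QB.comul h))) := by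
        rw [evalAt_smashMul_tmul, QB.dualTensor_counit_left, sliceMap_comp]
        rfl
    _ = sliceMap φ (a ⊗ₜ[k] h) := by
        rw [smashKernel_apply, ← Algebra.TensorProduct.one_def, one_mul,
          map_mul (mapSecond A QB.counitLeft), map_mul (mapSecond A QB.counitLeft),
          mapSecond_counitLeft_reassociator_inv, mapSecond_counitLeft_appendOne_rho,
          Algebra.TensorProduct.map_tmul, QB.counitLeft_comul]
        simp
    _ = evalAt h (a ⊗ₜ[k] φ) := by
        simp

/-- The quasi-smash product `A #̄ H^*` as a left `H`-module algebra. -/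
def quasiSmash : LeftModuleAlgebra QB (A ⊗[k] Module.Dual k H) where
  mul := CA.smashMul
  one := 1 ⊗ₜ[k] QB.counit.toLinearMap
  act := dualAct
  act_one := dualAct_one
  act_mul := dualAct_mul
  mul_one := CA.smashMul_one
  one_mul := CA.one_smashMul
  mul_assoc := CA.smashMul_assoc
  act_mul_mul := CA.dualAct_smashMul
  act_unit := fun h => dualAct_tmul_algHom h 1 QB.counit

end RightComoduleAlgebra

theorem quasi_smash_product_is_left_module_algebra_general
    {k : Type*} [Field k] {H : Type*} [Ring H] [Algebra k H]
    (QB : QuasiBialgebra k H)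
    {A : Type*} [Ring A] [Algebra k A] (CA : RightComoduleAlgebra QB A) :
    ∃ MA : LeftModuleAlgebra QB (A ⊗[k] Module.Dual k H),
      (∀ (a a' : A) (φ ψ : Module.Dual k H),
        MA.mul (a ⊗ₜ[k] φ) (a' ⊗ₜ[k] ψ) =
          ∑ i ∈ range CA.nR, ∑ j ∈ range CA.nQ,
            (a * CA.r0 a' i * CA.Q1 j) ⊗ₜ[k]
              convC QB.comul.toLinearMap
                (lA k (CA.r1 a' i * CA.Q2 j) φ) (lA k (CA.Q3 j) ψ)) ∧
      MA.one = (1 : A) ⊗ₜ[k] (QB.counit.toLinearMap : Module.Dual k H) ∧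
      (∀ (h : H) (a : A) (φ : Module.Dual k H),
        MA.act h (a ⊗ₜ[k] φ) = a ⊗ₜ[k] rA k h φ) :=
  ⟨CA.quasiSmash, CA.smashMul_tmul_eq_sum, rfl, fun _ _ _ => rfl⟩

/-- Let `H` be a finite dimensional quasi-bialgebra and `𝔄` a right
`H`-comodule algebra. Then `𝔄 ⊗ H^*`, with the quasi-smash product multiplication
`(a #̄ φ)(a' #̄ ψ) = ∑ a a'⟨0⟩ x̃¹ρ #̄ (φ ↼ a'⟨1⟩x̃²ρ)(ψ ↼ x̃³ρ)`, unit `1 #̄ ε`, and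
left `H`-action `h·(a #̄ φ) = a #̄ (h ⇀ φ)`, is a left `H`-module algebra. -/
theorem quasi_smash_product_is_left_module_algebra
    {k : Type*} [Field k] {H : Type*} [Ring H] [Algebra k H] [FiniteDimensional k H]
    (QB : QuasiBialgebra k H)
    {A : Type*} [Ring A] [Algebra k A] (CA : RightComoduleAlgebra QB A) :
    ∃ MA : LeftModuleAlgebra QB (A ⊗[k] Module.Dual k H),
      (∀ (a a' : A) (φ ψ : Module.Dual k H),
        MA.mul (a ⊗ₜ[k] φ) (a' ⊗ₜ[k] ψ) =
          ∑ i ∈ Finset.range CA.nR, ∑ j ∈ Finset.range CA.nQ,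
            (a * CA.r0 a' i * CA.Q1 j) ⊗ₜ[k]
              convC QB.comul.toLinearMap
                (lA k (CA.r1 a' i * CA.Q2 j) φ) (lA k (CA.Q3 j) ψ)) ∧
      MA.one = (1 : A) ⊗ₜ[k] (QB.counit.toLinearMap : Module.Dual k H) ∧
      (∀ (h : H) (a : A) (φ : Module.Dual k H),
        MA.act h (a ⊗ₜ[k] φ) = a ⊗ₜ[k] rA k h φ) :=
  quasi_smash_product_is_left_module_algebra_general QB CA
end
end

section
/- Let H be a quasi-Hopf algebra and (𝔄, ρ, Φ_ρ) a right H-comodule algebra. Then 𝒱 = 𝔄⊗H is a two-sided (𝔄,H)-Hopf module with structure maps h≻(a⊗h') = a⊗hh', (a⊗h)≺a' = ∑ a a'⟨0⟩ ⊗ h a'⟨1⟩, and ρ_𝒱(a⊗h) = ∑ a X̃¹_ρ ⊗ h₁ X̃²_ρ ⊗ h₂ X̃³_ρ, where Φ_ρ = ∑X̃¹_ρ⊗X̃²_ρ⊗X̃³_ρ. -/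
open TensorProduct Finset

noncomputable section

/-! Every structure map of `𝔄 ⊗ H` is given by products in tensor product algebras:
`h ≻ m = (1 ⊗ h) m`, `m ≺ a = m ρ(a)`, and the coaction is `m ↦ (id ⊗ Δ)(m) Φ_ρ`, an algebra map
followed by right multiplication. The Hopf module axioms thereby become identities between
elements: colinearity over `𝔄` says that `Φ_ρ` intertwines `(ρ ⊗ id)ρ` and `(id ⊗ Δ)ρ`, while
quasi-coassociativity is the cocycle identity of `Φ_ρ` once `1 ⊗ Φ` has been moved past the
iterated comultiplication of `m`. -/

section TensorProductAlgebras

variable {R A B C : Type*} [CommSemiring R] [Semiring A] [Algebra R A] [Semiring B] [Algebra R B]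
  [Semiring C] [Algebra R C]

variable (A) in
/-- The inclusion `x ↦ 1 ⊗ x` of `B ⊗ C` as the last two factors of a triple tensor product,
which is bracketed to the left because the carrier of the Hopf module is `𝔄 ⊗ H`. -/
def includeLastTwo : B ⊗[R] C →ₐ[R] (A ⊗[R] B) ⊗[R] C :=
  (Algebra.TensorProduct.assoc R R R A B C).symm.toAlgHom.comp Algebra.TensorProduct.includeRight

@[simp]
theorem includeLastTwo_tmul (b : B) (c : C) :
    includeLastTwo A (b ⊗ₜ[R] c) = ((1 : A) ⊗ₜ[R] b) ⊗ₜ[R] c := rfl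

theorem commute_includeLastTwo (a : A) (x : B ⊗[R] C) :
    Commute (includeLastTwo A x) ((a ⊗ₜ[R] (1 : B)) ⊗ₜ[R] (1 : C)) := by
  have h : Commute ((1 : A) ⊗ₜ[R] x) (a ⊗ₜ[R] (1 : B ⊗[R] C)) := by simp [Commute, SemiconjBy]
  exact h.map (Algebra.TensorProduct.assoc R R R A B C).symm

end TensorProductAlgebras

namespace QuasiBialgebra

variable {k : Type*} [Field k] {H : Type*} [Ring H] [Algebra k H] (QB : QuasiBialgebra k H)

/-- The reassociator `Φ`, as an element of `H ⊗ (H ⊗ H)`. -/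
def reassoc : H ⊗[k] (H ⊗[k] H) :=
  ∑ s ∈ range QB.nP, QB.X1 s ⊗ₜ[k] (QB.X2 s ⊗ₜ[k] QB.X3 s)

/-- The inverse `Φ⁻¹` of the reassociator. -/
def reassocInv : H ⊗[k] (H ⊗[k] H) :=
  ∑ q ∈ range QB.nQ, QB.x1 q ⊗ₜ[k] (QB.x2 q ⊗ₜ[k] QB.x3 q)

theorem reassocInv_mul_reassoc : QB.reassocInv * QB.reassoc = 1 := by
  simpa [reassocInv, reassoc, sum_mul_sum, Algebra.TensorProduct.one_def] using QB.inv_P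

/-- The iterated comultiplication `(Δ ⊗ id) ∘ Δ`, rebracketed to take values in `H ⊗ (H ⊗ H)`. -/
def comulLeft : H →ₐ[k] H ⊗[k] (H ⊗[k] H) :=
  ((Algebra.TensorProduct.assoc k k k H H H).toAlgHom.comp
    (Algebra.TensorProduct.map QB.comul (AlgHom.id k H))).comp QB.comul

/-- The iterated comultiplication `(id ⊗ Δ) ∘ Δ`. -/
def comulRight : H →ₐ[k] H ⊗[k] (H ⊗[k] H) :=
  (Algebra.TensorProduct.map (AlgHom.id k H) QB.comul).comp QB.comul

theorem comulRight_eq_conj_comulLeft (h : H) :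
    QB.comulRight h = QB.reassoc * QB.comulLeft h * QB.reassocInv := by
  have hcoassoc := QB.coassoc h
  simp only [comulRight, comulLeft, AlgHom.comp_apply, QB.hcomul, map_sum,
    Algebra.TensorProduct.map_tmul, AlgHom.id_apply, tmul_sum, sum_tmul, reassoc, reassocInv,
    AlgEquiv.coe_toAlgHom, Algebra.TensorProduct.assoc_tmul, mul_assoc] at hcoassoc ⊢
  simp only [sum_mul]
  simp only [mul_sum, Algebra.TensorProduct.tmul_mul_tmul]
  exact hcoassoc

theorem semiconjBy_reassoc (h : H) :
    SemiconjBy QB.reassoc (QB.comulLeft h) (QB.comulRight h) := by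
  rw [SemiconjBy, comulRight_eq_conj_comulLeft, mul_assoc _ QB.reassocInv, reassocInv_mul_reassoc,
    mul_one]

variable (A : Type*) [Ring A] [Algebra k A]

/-- The algebra map `id ⊗ ε` from `A ⊗ H` to `A`. -/
def idCounit : A ⊗[k] H →ₐ[k] A :=
  (Algebra.TensorProduct.rid k k A).toAlgHom.comp
    (Algebra.TensorProduct.map (AlgHom.id k A) QB.counit)

@[simp]
theorem idCounit_tmul (a : A) (h : H) : QB.idCounit A (a ⊗ₜ[k] h) = QB.counit h • a := rfl

/-- The algebra map `id ⊗ Δ` on `A ⊗ H`, rebracketed to take values in `(A ⊗ H) ⊗ H`. -/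
def idComul : A ⊗[k] H →ₐ[k] (A ⊗[k] H) ⊗[k] H :=
  (Algebra.TensorProduct.assoc k k k A H H).symm.toAlgHom.comp
    (Algebra.TensorProduct.map (AlgHom.id k A) QB.comul)

theorem idComul_tmul (a : A) (h : H) : QB.idComul A (a ⊗ₜ[k] h) =
    ∑ i ∈ range QB.nD, (a ⊗ₜ[k] QB.D1 h i) ⊗ₜ[k] QB.D2 h i := by
  simp [idComul, QB.hcomul, tmul_sum]

theorem idComul_tmul_one (a : A) : QB.idComul A (a ⊗ₜ[k] 1) = (a ⊗ₜ[k] 1) ⊗ₜ[k] 1 := by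
  simp [idComul, Algebra.TensorProduct.one_def]

theorem idCounit_idComul (m : A ⊗[k] H) : QB.idCounit (A ⊗[k] H) (QB.idComul A m) = m := by
  induction m with
  | zero => simp only [map_zero]
  | tmul a h =>
    conv_rhs => rw [← QB.counit_r h]
    simp only [idComul_tmul, map_sum, idCounit_tmul, tmul_sum, tmul_smul]
  | add x y hx hy => rw [map_add, map_add, hx, hy]

/-- The algebra map `id ⊗ Δ ⊗ id` on `(A ⊗ H) ⊗ H`, rebracketed to take values in
`(A ⊗ H) ⊗ (H ⊗ H)`. -/
def comulMiddle : (A ⊗[k] H) ⊗[k] H →ₐ[k] (A ⊗[k] H) ⊗[k] (H ⊗[k] H) :=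
  (Algebra.TensorProduct.assoc k k k (A ⊗[k] H) H H).toAlgHom.comp
    (Algebra.TensorProduct.map (QB.idComul A) (AlgHom.id k H))

/-- The algebra map `id ⊗ id ⊗ Δ` on `(A ⊗ H) ⊗ H`. -/
def comulLast : (A ⊗[k] H) ⊗[k] H →ₐ[k] (A ⊗[k] H) ⊗[k] (H ⊗[k] H) :=
  Algebra.TensorProduct.map (AlgHom.id k (A ⊗[k] H)) QB.comul

theorem comulMiddle_idComul_tmul_one (a : A) :
    QB.comulMiddle A (QB.idComul A (a ⊗ₜ[k] 1)) = (a ⊗ₜ[k] 1) ⊗ₜ[k] 1 := by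
  simp [comulMiddle, idComul_tmul_one, Algebra.TensorProduct.one_def]

theorem comulLast_idComul_tmul_one (a : A) :
    QB.comulLast A (QB.idComul A (a ⊗ₜ[k] 1)) = (a ⊗ₜ[k] 1) ⊗ₜ[k] 1 := by
  simp [comulLast, idComul_tmul_one]

theorem comulMiddle_idComul_one_tmul (h : H) :
    QB.comulMiddle A (QB.idComul A (1 ⊗ₜ[k] h)) = includeLastTwo A (QB.comulLeft h) := by
  simp [comulMiddle, comulLeft, idComul_tmul, QB.hcomul, sum_tmul]

theorem comulLast_idComul_one_tmul (h : H) :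
    QB.comulLast A (QB.idComul A (1 ⊗ₜ[k] h)) = includeLastTwo A (QB.comulRight h) := by
  simp [comulLast, comulRight, idComul_tmul, QB.hcomul, tmul_sum]

/-- The element `1 ⊗ Φ` of `(A ⊗ H) ⊗ (H ⊗ H)`. -/
def oneReassoc : (A ⊗[k] H) ⊗[k] (H ⊗[k] H) := includeLastTwo A QB.reassoc

theorem oneReassoc_eq_sum : QB.oneReassoc A =
    ∑ s ∈ range QB.nP, ((1 : A) ⊗ₜ[k] QB.X1 s) ⊗ₜ[k] (QB.X2 s ⊗ₜ[k] QB.X3 s) := by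
  simp only [oneReassoc, reassoc, map_sum, includeLastTwo_tmul]

theorem semiconjBy_oneReassoc (m : A ⊗[k] H) :
    SemiconjBy (QB.oneReassoc A)
      (QB.comulMiddle A (QB.idComul A m)) (QB.comulLast A (QB.idComul A m)) := by
  induction m with
  | zero => simp only [map_zero, SemiconjBy.zero_right]
  | tmul a h =>
    have hleft : SemiconjBy (QB.oneReassoc A) (QB.comulMiddle A (QB.idComul A (a ⊗ₜ[k] 1)))
        (QB.comulLast A (QB.idComul A (a ⊗ₜ[k] 1))) := by
      rw [comulMiddle_idComul_tmul_one, comulLast_idComul_tmul_one]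
      exact commute_includeLastTwo a QB.reassoc
    have hright : SemiconjBy (QB.oneReassoc A) (QB.comulMiddle A (QB.idComul A (1 ⊗ₜ[k] h)))
        (QB.comulLast A (QB.idComul A (1 ⊗ₜ[k] h))) := by
      rw [comulMiddle_idComul_one_tmul, comulLast_idComul_one_tmul]
      exact (QB.semiconjBy_reassoc h).map (includeLastTwo A)
    have hfactor : a ⊗ₜ[k] h = (a ⊗ₜ[k] (1 : H)) * ((1 : A) ⊗ₜ[k] h) := by simp
    simpa only [hfactor, map_mul] using hleft.mul_right hright
  | add x y hx hy => simpa only [map_add] using hx.add_right hy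

end QuasiBialgebra

namespace RightComoduleAlgebra

variable {k : Type*} [Field k] {H : Type*} [Ring H] [Algebra k H] {QB : QuasiBialgebra k H}
  {A : Type*} [Ring A] [Algebra k A] (CA : RightComoduleAlgebra QB A)

/-- The reassociator `Φ_ρ`, as an element of `(𝔄 ⊗ H) ⊗ H`. -/
def reassoc : (A ⊗[k] H) ⊗[k] H :=
  ∑ s ∈ range CA.nP, (CA.P1 s ⊗ₜ[k] CA.P2 s) ⊗ₜ[k] CA.P3 s

theorem idCounit_reassoc : QB.idCounit (A ⊗[k] H) CA.reassoc = 1 := by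
  simpa only [reassoc, map_sum, QuasiBialgebra.idCounit_tmul, Algebra.TensorProduct.one_def]
    using CA.rca4b

/-- The iterated coaction `(ρ ⊗ id) ∘ ρ` of the comodule algebra. -/
def rhoRho : A →ₐ[k] (A ⊗[k] H) ⊗[k] H :=
  (Algebra.TensorProduct.map CA.rho (AlgHom.id k H)).comp CA.rho

theorem rhoRho_eq_sum (a : A) :
    CA.rhoRho a = ∑ i ∈ range CA.nR, CA.rho (CA.r0 a i) ⊗ₜ[k] CA.r1 a i := by
  rw [rhoRho, AlgHom.comp_apply, CA.hrho a, map_sum]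
  rfl

theorem semiconjBy_reassoc (a : A) :
    SemiconjBy CA.reassoc (CA.rhoRho a) (QB.idComul A (CA.rho a)) := by
  have hquasi := congrArg (Algebra.TensorProduct.assoc k k k A H H).symm (CA.rca1 a)
  simp only [map_sum, Algebra.TensorProduct.assoc_symm_tmul] at hquasi
  simp only [SemiconjBy, rhoRho_eq_sum, reassoc, CA.hrho, map_sum, sum_tmul,
    QuasiBialgebra.idComul_tmul, sum_mul]
  simp only [mul_sum, Algebra.TensorProduct.tmul_mul_tmul]
  exact hquasi

/-- The element `Φ_ρ ⊗ 1`, rebracketed to lie in `(𝔄 ⊗ H) ⊗ (H ⊗ H)`. -/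
def reassocOne : (A ⊗[k] H) ⊗[k] (H ⊗[k] H) :=
  Algebra.TensorProduct.assoc k k k (A ⊗[k] H) H H (CA.reassoc ⊗ₜ[k] 1)

/-- The element `(ρ ⊗ id ⊗ id)(Φ_ρ)` of `(𝔄 ⊗ H) ⊗ (H ⊗ H)`. -/
def rhoReassoc : (A ⊗[k] H) ⊗[k] (H ⊗[k] H) :=
  ∑ j ∈ range CA.nP, CA.rho (CA.P1 j) ⊗ₜ[k] (CA.P2 j ⊗ₜ[k] CA.P3 j)

theorem reassoc_cocycle :
    QB.oneReassoc A * QB.comulMiddle A CA.reassoc * CA.reassocOne =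
      QB.comulLast A CA.reassoc * CA.rhoReassoc := by
  have hcocycle := congrArg (Algebra.TensorProduct.assoc k k k A H (H ⊗[k] H)).symm CA.rca2
  simp only [map_sum, Algebra.TensorProduct.assoc_symm_tmul, mul_assoc] at hcocycle
  simp only [QuasiBialgebra.oneReassoc_eq_sum, QuasiBialgebra.comulMiddle,
    QuasiBialgebra.comulLast, reassocOne, rhoReassoc, reassoc, QB.hcomul, CA.hrho, map_sum,
    AlgHom.comp_apply, AlgEquiv.coe_toAlgHom, Algebra.TensorProduct.map_tmul, AlgHom.id_apply,
    QuasiBialgebra.idComul_tmul, sum_tmul, tmul_sum, Algebra.TensorProduct.assoc_tmul, mul_assoc,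
    sum_mul]
  simp only [mul_sum, Algebra.TensorProduct.tmul_mul_tmul, mul_one, one_mul]
  exact hcocycle

/-- The left `H`-action `h ≻ m = (1 ⊗ h) m` on `𝔄 ⊗ H`. -/
def leftAction : H →ₗ[k] A ⊗[k] H →ₗ[k] A ⊗[k] H :=
  LinearMap.mul k (A ⊗[k] H) ∘ₗ
    (Algebra.TensorProduct.includeRight : H →ₐ[k] A ⊗[k] H).toLinearMap

theorem leftAction_eq_mulLeft (h : H) :
    leftAction (k := k) h = LinearMap.mulLeft k ((1 : A) ⊗ₜ[k] h) := rfl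

theorem leftAction_tmul (h : H) (a : A) (h' : H) :
    leftAction h (a ⊗ₜ[k] h') = a ⊗ₜ[k] (h * h') := by
  simp [leftAction_eq_mulLeft]

/-- The right `𝔄`-action `m ≺ a = m ρ(a)` on `𝔄 ⊗ H`. -/
def rightAction : A →ₗ[k] A ⊗[k] H →ₗ[k] A ⊗[k] H :=
  (LinearMap.mul k (A ⊗[k] H)).flip ∘ₗ CA.rho.toLinearMap

theorem rightAction_eq_mulRight (a : A) :
    CA.rightAction a = LinearMap.mulRight k (CA.rho a) := rfl

theorem rightAction_tmul (a' a : A) (h : H) : CA.rightAction a' (a ⊗ₜ[k] h) =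
    ∑ i ∈ range CA.nR, (a * CA.r0 a' i) ⊗ₜ[k] (h * CA.r1 a' i) := by
  simp [rightAction_eq_mulRight, CA.hrho, mul_sum]

/-- The right `H`-coaction `m ↦ (id ⊗ Δ)(m) Φ_ρ` on `𝔄 ⊗ H`. -/
def coaction : A ⊗[k] H →ₗ[k] (A ⊗[k] H) ⊗[k] H :=
  LinearMap.mulRight k CA.reassoc ∘ₗ (QB.idComul A).toLinearMap

theorem coaction_apply (m : A ⊗[k] H) : CA.coaction m = QB.idComul A m * CA.reassoc := rfl

theorem coaction_tmul (a : A) (h : H) : CA.coaction (a ⊗ₜ[k] h) =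
    ∑ i ∈ range QB.nD, ∑ s ∈ range CA.nP,
      ((a * CA.P1 s) ⊗ₜ[k] (QB.D1 h i * CA.P2 s)) ⊗ₜ[k] (QB.D2 h i * CA.P3 s) := by
  simp [coaction_apply, QuasiBialgebra.idComul_tmul, reassoc, sum_mul_sum]

theorem idCounit_coaction (m : A ⊗[k] H) : QB.idCounit (A ⊗[k] H) (CA.coaction m) = m := by
  rw [coaction_apply, map_mul, idCounit_reassoc, QuasiBialgebra.idCounit_idComul, mul_one]

theorem coaction_mul (x m : A ⊗[k] H) :
    CA.coaction (x * m) = QB.idComul A x * CA.coaction m := by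
  simp only [coaction_apply, map_mul, mul_assoc]

theorem coaction_mul_rho (m : A ⊗[k] H) (a : A) :
    CA.coaction (m * CA.rho a) = CA.coaction m * CA.rhoRho a := by
  simp only [coaction_apply, map_mul, mul_assoc, (CA.semiconjBy_reassoc a).eq]

theorem map_coaction_id (z : (A ⊗[k] H) ⊗[k] H) :
    TensorProduct.map CA.coaction LinearMap.id z =
      Algebra.TensorProduct.map (QB.idComul A) (AlgHom.id k H) z * (CA.reassoc ⊗ₜ[k] 1) := by
  induction z with
  | zero => simp only [map_zero, zero_mul]
  | tmul m h => simp [coaction_apply]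
  | add x y hx hy => rw [map_add, map_add, hx, hy, add_mul]

theorem assoc_map_coaction_id (z : (A ⊗[k] H) ⊗[k] H) :
    TensorProduct.assoc k (A ⊗[k] H) H H (TensorProduct.map CA.coaction LinearMap.id z) =
      QB.comulMiddle A z * CA.reassocOne := by
  rw [map_coaction_id]
  exact map_mul (Algebra.TensorProduct.assoc k k k (A ⊗[k] H) H H) _ _

theorem oneReassoc_mul_comulMiddle_coaction (m : A ⊗[k] H) :
    QB.oneReassoc A * (QB.comulMiddle A (CA.coaction m) * CA.reassocOne) =
      QB.comulLast A (CA.coaction m) * CA.rhoReassoc := by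
  let Δm := QB.idComul A m
  calc QB.oneReassoc A * (QB.comulMiddle A (Δm * CA.reassoc) * CA.reassocOne)
      = QB.oneReassoc A * QB.comulMiddle A Δm * QB.comulMiddle A CA.reassoc * CA.reassocOne := by
        simp only [map_mul, mul_assoc]
    _ = QB.comulLast A Δm * (QB.oneReassoc A * QB.comulMiddle A CA.reassoc * CA.reassocOne) := by
        rw [(QB.semiconjBy_oneReassoc A m).eq]
        simp only [Δm, mul_assoc]
    _ = QB.comulLast A (Δm * CA.reassoc) * CA.rhoReassoc := by
        rw [CA.reassoc_cocycle, map_mul, mul_assoc]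

/-- The two-sided Hopf module `𝒱 = 𝔄 ⊗ H`, with the actions `leftAction` and `rightAction` and the
coaction `coaction`. -/
def tensorHopfModule : TwoSidedHopfModule QB CA (A ⊗[k] H) where
  ha := leftAction
  ha_one m := by simp [leftAction_eq_mulLeft, ← Algebra.TensorProduct.one_def]
  ha_mul g h m := by simp [leftAction_eq_mulLeft, ← mul_assoc]
  ra := CA.rightAction
  ra_one m := by simp [rightAction_eq_mulRight]
  ra_mul a b m := by simp [rightAction_eq_mulRight, mul_assoc]
  ha_ra h a m := by simp [rightAction_eq_mulRight, leftAction_eq_mulLeft, mul_assoc]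
  rho := CA.coaction
  counit_rho := CA.idCounit_coaction
  coassoc_rho m := by
    simp only [leftAction_eq_mulLeft, rightAction_eq_mulRight, ← LinearMap.mulLeft_tmul,
      ← LinearMap.mulRight_tmul, LinearMap.mulLeft_apply, LinearMap.mulRight_apply, ← sum_mul,
      ← mul_sum, assoc_map_coaction_id, ← QuasiBialgebra.oneReassoc_eq_sum]
    exact CA.oneReassoc_mul_comulMiddle_coaction m
  colin_l h m := by
    simp only [leftAction_eq_mulLeft, ← LinearMap.mulLeft_tmul, LinearMap.mulLeft_apply, ← sum_mul,
      coaction_mul, QuasiBialgebra.idComul_tmul]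
  colin_r a m := by
    simp only [rightAction_eq_mulRight, ← LinearMap.mulRight_tmul, LinearMap.mulRight_apply,
      ← mul_sum, coaction_mul_rho, rhoRho_eq_sum]

end RightComoduleAlgebra

theorem tensor_A_H_is_two_sided_hopf_module_general
    {k : Type*} [Field k] {H : Type*} [Ring H] [Algebra k H]
    {QB : QuasiBialgebra k H}
    {A : Type*} [Ring A] [Algebra k A]
    (CA : RightComoduleAlgebra QB A) :
    ∃ T : TwoSidedHopfModule QB CA (A ⊗[k] H),
      (∀ (h : H) (a : A) (h' : H), T.ha h (a ⊗ₜ[k] h') = a ⊗ₜ[k] (h * h')) ∧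
      (∀ (a' a : A) (h : H), T.ra a' (a ⊗ₜ[k] h) =
        ∑ i ∈ range CA.nR, (a * CA.r0 a' i) ⊗ₜ[k] (h * CA.r1 a' i)) ∧
      (∀ (a : A) (h : H), T.rho (a ⊗ₜ[k] h) =
        ∑ i ∈ range QB.nD, ∑ s ∈ range CA.nP,
          ((a * CA.P1 s) ⊗ₜ[k] (QB.D1 h i * CA.P2 s)) ⊗ₜ[k] (QB.D2 h i * CA.P3 s)) :=
  ⟨CA.tensorHopfModule, RightComoduleAlgebra.leftAction_tmul, CA.rightAction_tmul,
    CA.coaction_tmul⟩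

/-- Let `H` be a quasi-Hopf algebra and `𝔄` a right `H`-comodule
algebra. Then `𝒱 = 𝔄 ⊗ H` is a two-sided `(𝔄,H)`-Hopf module with
`h ≻ (a⊗h') = a ⊗ hh'`, `(a⊗h) ≺ a' = ∑ a a'⟨0⟩ ⊗ h a'⟨1⟩` and
`ρ(a⊗h) = ∑ a X̃¹ρ ⊗ h₁ X̃²ρ ⊗ h₂ X̃³ρ`. -/
theorem tensor_A_H_is_two_sided_hopf_module
    {k : Type*} [Field k] {H : Type*} [Ring H] [Algebra k H]
    (QH : QuasiHopfAlgebra k H)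
    {A : Type*} [Ring A] [Algebra k A]
    (CA : RightComoduleAlgebra QH.toQuasiBialgebra A) :
    ∃ T : TwoSidedHopfModule QH.toQuasiBialgebra CA (A ⊗[k] H),
      (∀ (h : H) (a : A) (h' : H), T.ha h (a ⊗ₜ[k] h') = a ⊗ₜ[k] (h * h')) ∧
      (∀ (a' a : A) (h : H), T.ra a' (a ⊗ₜ[k] h) =
        ∑ i ∈ Finset.range CA.nR, (a * CA.r0 a' i) ⊗ₜ[k] (h * CA.r1 a' i)) ∧
      (∀ (a : A) (h : H), T.rho (a ⊗ₜ[k] h) =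
        ∑ i ∈ Finset.range QH.nD, ∑ s ∈ Finset.range CA.nP,
          ((a * CA.P1 s) ⊗ₜ[k] (QH.D1 h i * CA.P2 s)) ⊗ₜ[k] (QH.D2 h i * CA.P3 s)) :=
  tensor_A_H_is_two_sided_hopf_module_general CA
end
end
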